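/- Let Γ be a distance-regular graph with classical parameters (D, b, α, β), D ≥ 4, and intersection numbers a₁ = 0 and a₂ ≠ 0. Fix vertices x, y with ∂(x,y) = 3, set C = {z ∈ Γ₃(x) : B(x,z) = B(x,y)} and Δ = [x,C] = {v ∈ X : ∃ z ∈ C with ∂(x,v)+∂(v,z)=∂(x,z)}. Suppose z, u ∈ Δ and s t u z w is a pentagon in Γ with z, w ∈ Γ₂(x) and u ∈ Γ₃(x). Then w ∈ Δ. -/

import Mathlib

/-!
Common definitions: distance-regular graphs (via an intersection-number function `p`),
classical parameters, and the sets `B(x,y)`, `A(x,y)`, `C(x,y)`.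
The distance `∂` is `SimpleGraph.dist`.
-/

variable {V : Type*}

/-- `Γ` is distance-regular with intersection numbers `p h i j = p^h_{ij}`
(for indices up to the diameter `D`). -/
def SimpleGraph.IsDistRegularWith (G : SimpleGraph V) (D : ℕ) (p : ℕ → ℕ → ℕ → ℕ) : Prop :=
  ∀ h i j : ℕ, h ≤ D → i ≤ D → j ≤ D → ∀ x y : V, G.dist x y = h →
    {z : V | G.dist x z = i ∧ G.dist y z = j}.ncard = p h i j

/-- The Gaussian bracket `[i] = 1 + b + b² + ⋯ + b^{i-1}`. -/
def gaussBracket (b : ℝ) (i : ℕ) : ℝ := ∑ k ∈ Finset.range i, b ^ k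

/-- A distance-regular graph with intersection numbers `p` has classical parameters
`(D, b, α, β)`: `b ∉ {0, -1}`, `c_i = [i](1 + α[i-1])` and `b_i = ([D]-[i])(β - α[i])`
for `0 ≤ i ≤ D`, where `c_i = p^i_{1,i-1}` and `b_i = p^i_{1,i+1}`. -/
def HasClassicalParams (D : ℕ) (p : ℕ → ℕ → ℕ → ℕ) (b α β : ℝ) : Prop :=
  b ≠ 0 ∧ b ≠ -1 ∧
    (∀ i ≤ D, (p i 1 (i - 1) : ℝ) = gaussBracket b i * (1 + α * gaussBracket b (i - 1))) ∧
    (∀ i ≤ D, (p i 1 (i + 1) : ℝ) =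
      (gaussBracket b D - gaussBracket b i) * (β - α * gaussBracket b i))

/-- `B(x,y) = Γ₁(x) ∩ Γ_{∂(x,y)+1}(y)`. -/
def Bset (G : SimpleGraph V) (x y : V) : Set V :=
  {v | G.dist x v = 1 ∧ G.dist y v = G.dist x y + 1}

/-- `A(x,y) = Γ₁(x) ∩ Γ_{∂(x,y)}(y)`. -/
def Aset (G : SimpleGraph V) (x y : V) : Set V :=
  {v | G.dist x v = 1 ∧ G.dist y v = G.dist x y}

/-- `C(x,y) = Γ₁(x) ∩ Γ_{∂(x,y)-1}(y)`. -/
def Cset (G : SimpleGraph V) (x y : V) : Set V :=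
  {v | G.dist x v = 1 ∧ G.dist y v = G.dist x y - 1}

/-- `C = {z ∈ Γ₃(x) : B(x,z) = B(x,y)}`. -/
def Cclass (G : SimpleGraph V) (x y : V) : Set V :=
  {z | G.dist x z = 3 ∧ Bset G x z = Bset G x y}

/-- `Δ = [x, C] = {v : ∃ z ∈ C, ∂(x,v) + ∂(v,z) = ∂(x,z)}`. -/
def Delta (G : SimpleGraph V) (x y : V) : Set V :=
  {v | ∃ z ∈ Cclass G x y, G.dist x v + G.dist v z = G.dist x z}

/-!
The matrices `(b⁻¹) ^ (j * ∂(x, y))` form a flag on which multiplication by the adjacency matrix is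
triangular, so `Γ` is `Q`-polynomial, and a vanishing Krein parameter gives the balanced set
condition for the function `φ h = b⁻¹ ^ h`. At distance two this reads
`∑ z ∈ A(x, y), φ ∂(z, w) - ∑ z ∈ A(y, x), φ ∂(z, w) = (1 + b - c₂) * (φ ∂(x, w) - φ ∂(y, w))`,
where `b < -1`. Hence `Γ` has no parallelograms and two vertices at distance two lie in a strongly
closed subgraph of diameter two. If a vertex `x` is at distances `i` and `i + 1` only from such a
subgraph `S`, the number of neighbours in `S` of `g ∈ S` that are at distance `i + 1` from `x`
depends only on `∂(x, g)`; it is smaller by `c₂ - 1 - b > 0` when `∂(x, g) = i + 1`.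

Apply this to the subgraph `S` containing the path `u z w`. The vertex `w` has as many neighbours in
`S ∩ Γ₃(x)` as `z`, which has the neighbour `u`; let `w'` be such a neighbour. If `v ∈ B(x, u)` were
at distance three from `w'`, comparing the counts for `x` and for `v` at `u` and `w'` would give a
contradiction. Thus `B(x, u) ⊆ B(x, w')`, the two sets have the same size, and `w` lies on a
geodesic from `x` to `w' ∈ C`.
-/

open Finset Polynomial

section TriangularFlag

variable {K R : Type*} [Field K] [Ring R] [Algebra K R] {a : R} {θ : ℕ → K}
  {W : ℕ → Submodule K R} {m n N : ℕ} {x : R}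

/-- An increasing chain of subspaces `0 = W 0 ≤ W 1 ≤ ⋯` on which left multiplication by `a` is
triangular with diagonal entries `θ 0, θ 1, …`. It stands in for a basis that makes
multiplication by `a` triangular, so that no linear independence has to be checked. -/
structure IsTriangularFlag (a : R) (θ : ℕ → K) (W : ℕ → Submodule K R) : Prop where
  zero_eq_bot : W 0 = ⊥
  mono : Monotone W
  mul_sub_smul_mem : ∀ {n : ℕ} {x : R}, x ∈ W (n + 1) → a * x - θ n • x ∈ W n

namespace IsTriangularFlag

lemma mul_mem (hW : IsTriangularFlag a θ W) (hx : x ∈ W n) : a * x ∈ W n := by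
  cases n with
  | zero =>
    rw [hW.zero_eq_bot, Submodule.mem_bot] at hx ⊢
    rw [hx, mul_zero]
  | succ n =>
    rw [← sub_add_cancel (a * x) (θ n • x)]
    exact add_mem (hW.mono n.le_succ (hW.mul_sub_smul_mem hx)) (Submodule.smul_mem _ _ hx)

lemma aeval_mul_mem (hW : IsTriangularFlag a θ W) (P : K[X]) (hx : x ∈ W n) :
    aeval a P * x ∈ W n := by
  induction P using Polynomial.induction_on' with
  | add P Q hP hQ => rw [map_add, add_mul]; exact add_mem hP hQ
  | monomial k r =>
    rw [aeval_monomial, ← Algebra.smul_def, smul_mul_assoc]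
    refine Submodule.smul_mem _ _ ?_
    induction k with
    | zero => simpa using hx
    | succ k ih => rw [pow_succ', mul_assoc]; exact hW.mul_mem ih

lemma aeval_nodal_Ico_mul_mem (hW : IsTriangularFlag a θ W) (hnm : n ≤ m) (hx : x ∈ W m) :
    aeval a (Lagrange.nodal (Ico n m) θ) * x ∈ W n := by
  induction m, hnm using Nat.le_induction generalizing x with
  | base => simpa using hx
  | succ m hnm ih =>
    rw [Lagrange.nodal, prod_Ico_succ_top hnm, map_mul, mul_assoc]
    refine ih ?_
    simpa [sub_mul, Algebra.smul_def] using hW.mul_sub_smul_mem hx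

lemma aeval_nodal_mul_mem (hW : IsTriangularFlag a θ W) (hnm : n ≤ m) {s : Finset ℕ}
    (hs : Ico n m ⊆ s) (hx : x ∈ W m) : aeval a (Lagrange.nodal s θ) * x ∈ W n := by
  rw [Lagrange.nodal, ← prod_sdiff hs, map_mul, mul_assoc]
  exact hW.aeval_mul_mem _ (hW.aeval_nodal_Ico_mul_mem hnm hx)

lemma aeval_nodal_mul_eq_zero (hW : IsTriangularFlag a θ W) {s : Finset ℕ} (hs : range m ⊆ s)
    (hx : x ∈ W m) : aeval a (Lagrange.nodal s θ) * x = 0 := by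
  rw [range_eq_Ico] at hs
  have h := hW.aeval_nodal_mul_mem m.zero_le hs hx
  rwa [hW.zero_eq_bot, Submodule.mem_bot] at h

lemma aeval_nodal_range_eq_zero (hW : IsTriangularFlag a θ W) (h1 : 1 ∈ W N) :
    aeval a (Lagrange.nodal (range N) θ) = 0 := by
  simpa using hW.aeval_nodal_mul_eq_zero subset_rfl h1

end IsTriangularFlag

/-- The Lagrange polynomial of the node `θ i` evaluated at `a`: the projection onto the
`θ i`-eigenspace of `a` when `a` is diagonalizable with eigenvalues `θ 0, …, θ (N - 1)`. -/
noncomputable def spectralProj (a : R) (θ : ℕ → K) (N i : ℕ) : R :=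
  aeval a (Lagrange.basis (range N) θ i)

lemma spectralProj_eq_smul (a : R) (θ : ℕ → K) (N i : ℕ) :
    ∃ r : K, spectralProj a θ N i = r • aeval a (Lagrange.nodal ((range N).erase i) θ) := by
  refine ⟨∏ j ∈ (range N).erase i, (θ i - θ j)⁻¹, ?_⟩
  rw [Algebra.smul_def, ← aeval_C, ← map_mul, map_prod, Lagrange.nodal, ← prod_mul_distrib]
  rfl

namespace IsTriangularFlag

lemma spectralProj_mul_eq_zero (hW : IsTriangularFlag a θ W) {i : ℕ} (hi : i ≤ N)
    (hx : x ∈ W i) : spectralProj a θ N i * x = 0 := by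
  obtain ⟨r, hr⟩ := spectralProj_eq_smul a θ N i
  rw [hr, smul_mul_assoc, hW.aeval_nodal_mul_eq_zero _ hx, smul_zero]
  intro j hj
  simp only [mem_range, mem_erase] at hj ⊢
  omega

lemma spectralProj_mem (hW : IsTriangularFlag a θ W) (h1 : 1 ∈ W N) {i : ℕ} (hi : i < N) :
    spectralProj a θ N i ∈ W (i + 1) := by
  obtain ⟨r, hr⟩ := spectralProj_eq_smul a θ N i
  rw [hr]
  refine Submodule.smul_mem _ _ ?_
  have hs : Ico (i + 1) N ⊆ (range N).erase i := by
    intro j hj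
    simp only [mem_Ico, mem_range, mem_erase] at hj ⊢
    omega
  simpa using hW.aeval_nodal_mul_mem hi hs h1

lemma aeval_eq_sum_spectralProj (hW : IsTriangularFlag a θ W) (h1 : 1 ∈ W N)
    (hθ : Set.InjOn θ (range N)) (P : K[X]) :
    aeval a P = ∑ i ∈ range N, P.eval (θ i) • spectralProj a θ N i := by
  set M := Lagrange.nodal (range N) θ
  have hM : M.Monic := Lagrange.nodal_monic
  have hmod : P %ₘ M = Lagrange.interpolate (range N) θ fun i => P.eval (θ i) := by
    refine Lagrange.eq_interpolate_of_eval_eq _ hθ ?_ fun i hi => ?_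
    · rw [← Lagrange.degree_nodal (v := θ)]
      exact degree_modByMonic_lt P hM
    · exact eval₂_modByMonic_eq_self_of_root (Lagrange.eval_nodal_at_node hi)
  rw [← aeval_modByMonic_eq_self_of_root (hW.aeval_nodal_range_eq_zero h1), hmod,
    Lagrange.interpolate_apply, map_sum]
  simp only [map_mul, aeval_C, ← Algebra.smul_def, spectralProj]

end IsTriangularFlag

end TriangularFlag

section Tridiagonal

variable {K R : Type*} [CommRing K] [Ring R] [Algebra K R] {N : ℕ} {E : ℕ → R}

lemma sum_smul_mul_mul_sum_smul {ι : Type*} (s : Finset ι) (E : ι → R) (u v : ι → K) (d : R) :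
    (∑ i ∈ s, u i • E i) * d * ∑ j ∈ s, v j • E j =
      ∑ i ∈ s, ∑ j ∈ s, (u i * v j) • (E i * d * E j) := by
  simp only [sum_mul]
  refine sum_congr rfl fun i _ => ?_
  simp only [mul_sum, smul_mul_assoc, mul_smul_comm, smul_smul, mul_comm]

/- With respect to the `E i`, both sides are tridiagonal with zero diagonal, so `l` only has to have
prescribed consecutive differences. -/
lemma exists_mul_sub_mul_eq_commutator (hE : ∑ i ∈ range N, E i = 1) (s t : ℕ → K) :
    ∃ l : ℕ → K, ∀ d : R, (∀ i < N, ∀ j < N, i + 1 < j ∨ j + 1 < i → E i * d * E j = 0) →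
      (∑ i ∈ range N, s i • E i) * d * (∑ i ∈ range N, t i • E i) -
          (∑ i ∈ range N, t i • E i) * d * (∑ i ∈ range N, s i • E i) =
        (∑ i ∈ range N, l i • E i) * d - d * ∑ i ∈ range N, l i • E i := by
  refine ⟨fun i => -∑ k ∈ range i, (s k * t (k + 1) - t k * s (k + 1)), fun d hd => ?_⟩
  set l : ℕ → K := fun i => -∑ k ∈ range i, (s k * t (k + 1) - t k * s (k + 1)) with hl
  have l_succ (i : ℕ) : l (i + 1) = l i - (s i * t (i + 1) - t i * s (i + 1)) := by
    simp only [hl, sum_range_succ]; ring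
  have left : (∑ i ∈ range N, l i • E i) * d =
      (∑ i ∈ range N, l i • E i) * d * ∑ i ∈ range N, (1 : K) • E i := by simp [hE]
  have right : d * (∑ i ∈ range N, l i • E i) =
      (∑ i ∈ range N, (1 : K) • E i) * d * ∑ i ∈ range N, l i • E i := by simp [hE]
  rw [left, right]
  simp only [sum_smul_mul_mul_sum_smul, ← sum_sub_distrib, ← sub_smul]
  refine sum_congr rfl fun i hi => sum_congr rfl fun j hj => ?_
  rw [mem_range] at hi hj
  by_cases hij : i + 1 < j ∨ j + 1 < i
  · simp only [hd i hi j hj hij, smul_zero]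
  congr 1
  obtain rfl | rfl | rfl : i = j ∨ j = i + 1 ∨ i = j + 1 := by omega
  · ring
  · rw [l_succ]; ring
  · rw [l_succ]; ring

end Tridiagonal

section KreinCondition

open Matrix

variable {k l m n : Type*} [Fintype k] [Fintype l] [Fintype m] [Fintype n] [DecidableEq m]

lemma sum_diagonal_mul_mul_diagonal {R : Type*} [CommSemiring R] (K : Matrix k m R)
    (M : Matrix m m R) :
    ∑ w, diagonal (K w) * M * diagonal (K w) = M ⊙ (Kᵀ * K) := by
  ext x y
  simp only [Matrix.sum_apply, diagonal_mul, mul_diagonal, hadamard_apply]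
  simp only [mul_apply, transpose_apply, mul_sum]
  exact sum_congr rfl fun w _ => by ring

lemma mul_diagonal_mul_eq_zero_of_mul_hadamard_eq_zero {E : Matrix l m ℝ} {F : Matrix m n ℝ}
    {K : Matrix k m ℝ} (h : (Eᵀ * E) * ((F * Fᵀ) ⊙ (Kᵀ * K)) = 0) (w : k) :
    E * diagonal (K w) * F = 0 := by
  have trace_eq (w : k) : ((E * diagonal (K w) * F) * (E * diagonal (K w) * F)ᴴ).trace =
      ((Eᵀ * E) * (diagonal (K w) * (F * Fᵀ) * diagonal (K w))).trace := by
    rw [conjTranspose_eq_transpose_of_trivial, transpose_mul, transpose_mul, diagonal_transpose,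
      Matrix.mul_assoc Eᵀ, trace_mul_comm Eᵀ]
    simp only [Matrix.mul_assoc]
  have sum_eq : ∑ w, ((E * diagonal (K w) * F) * (E * diagonal (K w) * F)ᴴ).trace = 0 := by
    simp only [trace_eq]
    rw [← trace_sum, ← Matrix.mul_sum, sum_diagonal_mul_mul_diagonal, h, trace_zero]
  rw [sum_eq_zero_iff_of_nonneg fun w _ =>
    (posSemidef_self_mul_conjTranspose _).trace_nonneg] at sum_eq
  exact trace_mul_conjTranspose_self_eq_zero_iff.1 (sum_eq w (mem_univ w))

end KreinCondition

section DistMatrix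

open Matrix

/-- The matrix with `(x, y)` entry `f (∂(x, y))`. For a distance-regular graph these matrices make
up the Bose–Mesner algebra. -/
noncomputable def distMatrix (G : SimpleGraph V) : (ℕ → ℝ) →ₗ[ℝ] Matrix V V ℝ where
  toFun f := of fun x y => f (G.dist x y)
  map_add' _ _ := rfl
  map_smul' _ _ := rfl

/-- The flag in the space of distance matrices whose `n`-th term consists of the `distMatrix G f`
with `f h` a polynomial of degree less than `n` in `φ h`. -/
noncomputable def distFlag (G : SimpleGraph V) (φ : ℕ → ℝ) (n : ℕ) :
    Submodule ℝ (Matrix V V ℝ) :=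
  (degreeLT ℝ n).map (distMatrix G ∘ₗ LinearMap.pi fun h => leval (φ h))

/-- `Γ_i(x) ∩ Γ_j(y)`. -/
noncomputable def sphereInter [Fintype V] (G : SimpleGraph V) (x y : V) (i j : ℕ) : Finset V :=
  {z | G.dist x z = i ∧ G.dist y z = j}

/-- Terwilliger's balanced set condition for the dual eigenvalue sequence `φ`. -/
def IsBalanced [Fintype V] (G : SimpleGraph V) (φ : ℕ → ℝ) : Prop :=
  ∀ i j : ℕ, ∃ L : ℕ → ℝ, ∀ x y w : V,
    ∑ z ∈ sphereInter G x y i j, φ (G.dist z w) - ∑ z ∈ sphereInter G x y j i, φ (G.dist z w) =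
      L (G.dist x y) * (φ (G.dist x w) - φ (G.dist y w))

variable {G : SimpleGraph V} {φ θ : ℕ → ℝ} {D : ℕ}

@[simp]
lemma distMatrix_apply (f : ℕ → ℝ) (x y : V) : distMatrix G f x y = f (G.dist x y) := rfl

lemma transpose_distMatrix (f : ℕ → ℝ) : (distMatrix G f)ᵀ = distMatrix G f := by
  ext x y
  simp [SimpleGraph.dist_comm]

@[simp]
lemma mem_sphereInter [Fintype V] {x y z : V} {i j : ℕ} :
    z ∈ sphereInter G x y i j ↔ G.dist x z = i ∧ G.dist y z = j := by
  simp [sphereInter]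

lemma mem_distFlag {n : ℕ} {M : Matrix V V ℝ} :
    M ∈ distFlag G φ n ↔
      ∃ P : ℝ[X], P.degree < n ∧ distMatrix G (fun h => P.eval (φ h)) = M := by
  simp only [distFlag, Submodule.mem_map, mem_degreeLT]
  rfl

lemma distMatrix_mem_distFlag_two : distMatrix G φ ∈ distFlag G φ 2 :=
  mem_distFlag.2 ⟨X, by rw [degree_X]; exact Nat.one_lt_ofNat, by simp⟩

lemma hadamard_mem_distFlag {m n : ℕ} {M M' : Matrix V V ℝ} (hM : M ∈ distFlag G φ m)
    (hM' : M' ∈ distFlag G φ (n + 1)) : M ⊙ M' ∈ distFlag G φ (m + n) := by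
  obtain ⟨P, hP, rfl⟩ := mem_distFlag.1 hM
  obtain ⟨Q, hQ, rfl⟩ := mem_distFlag.1 hM'
  refine mem_distFlag.2 ⟨P * Q, ?_, by ext x y; simp⟩
  rcases eq_or_ne (P * Q) 0 with h | h
  · rw [h, degree_zero]
    exact WithBot.bot_lt_coe _
  · rw [← natDegree_lt_iff_degree_lt (left_ne_zero_of_mul h)] at hP
    rw [← natDegree_lt_iff_degree_lt (right_ne_zero_of_mul h)] at hQ
    rw [← natDegree_lt_iff_degree_lt h]
    exact natDegree_mul_le.trans_lt (by omega)

lemma distMatrix_mem_distFlag (hdist : ∀ x y, G.dist x y ≤ D) (hφ : Set.InjOn φ (range (D + 1)))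
    (f : ℕ → ℝ) : distMatrix G f ∈ distFlag G φ (D + 1) := by
  refine mem_distFlag.2 ⟨Lagrange.interpolate (range (D + 1)) φ f, ?_, ?_⟩
  · simpa using Lagrange.degree_interpolate_lt f hφ
  · ext x y
    exact Lagrange.eval_interpolate_at_node f hφ (mem_range_succ_iff.2 (hdist x y))

lemma distMatrix_mul_diagonal_mul_apply [Fintype V] [DecidableEq V] (i j : ℕ) (x y w : V) :
    (distMatrix G (Pi.single i 1) * diagonal (distMatrix G φ w) * distMatrix G (Pi.single j 1)) x y
      = ∑ z ∈ sphereInter G x y i j, φ (G.dist z w) := by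
  rw [mul_apply, sphereInter, sum_filter]
  refine sum_congr rfl fun z _ => ?_
  simp only [mul_diagonal, distMatrix_apply, Pi.single_apply, G.dist_comm (u := z) (v := y),
    G.dist_comm (u := w) (v := z)]
  split_ifs <;> simp_all

section Adjacency

variable [Fintype V] [DecidableEq V] [DecidableRel G.Adj]

lemma adjMatrix_pow_apply_eq_zero {n : ℕ} {x y : V} (h : n < G.dist x y) :
    (G.adjMatrix ℝ ^ n) x y = 0 := by
  rw [SimpleGraph.adjMatrix_pow_apply_eq_card_walk, Nat.cast_eq_zero, Fintype.card_eq_zero_iff]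
  exact ⟨fun w => (w.2 ▸ h).not_ge (G.dist_le w.1)⟩

lemma adjMatrix_pow_dist_apply_ne_zero (hG : G.Connected) (x y : V) :
    (G.adjMatrix ℝ ^ G.dist x y) x y ≠ 0 := by
  obtain ⟨w, hw⟩ := hG.exists_walk_length_eq_dist x y
  rw [SimpleGraph.adjMatrix_pow_apply_eq_card_walk, Nat.cast_ne_zero]
  exact (Fintype.card_pos_iff.2 ⟨⟨w, hw⟩⟩).ne'

lemma aeval_adjMatrix_ne_zero (hG : G.Connected) {P : ℝ[X]} (hP : P.Monic) {x y : V}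
    (hxy : G.dist x y = P.natDegree) : aeval (G.adjMatrix ℝ) P ≠ 0 := by
  intro h
  apply adjMatrix_pow_dist_apply_ne_zero hG x y
  have hxy_entry := congrFun₂ h x y
  rw [aeval_eq_sum_range, sum_range_succ, hP.coeff_natDegree, one_smul, Matrix.add_apply,
    Matrix.sum_apply, sum_eq_zero, zero_add, ← hxy] at hxy_entry
  · exact hxy_entry
  · intro i hi
    rw [Matrix.smul_apply, adjMatrix_pow_apply_eq_zero (hxy ▸ mem_range.1 hi), smul_zero]

end Adjacency

end DistMatrix

section QPolynomial

open Matrix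

variable [Fintype V] [DecidableEq V] {G : SimpleGraph V} [DecidableRel G.Adj] {D : ℕ}
  {θ φ : ℕ → ℝ}

/-- `G` has diameter `D` and a Q-polynomial structure with eigenvalues `θ` and dual eigenvalues
`φ`, encoded by the action of the adjacency matrix on polynomials in the dual eigenvalues. -/
structure IsQPolynomial (G : SimpleGraph V) [DecidableRel G.Adj] (D : ℕ) (θ φ : ℕ → ℝ) :
    Prop where
  connected : G.Connected
  dist_le : ∀ x y, G.dist x y ≤ D
  exists_dist_eq : ∃ x y, G.dist x y = D
  injOn_dual : Set.InjOn φ (range (D + 1))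
  isTriangularFlag : IsTriangularFlag (G.adjMatrix ℝ) θ (distFlag G φ)

namespace IsQPolynomial

lemma one_mem_distFlag (hG : IsQPolynomial G D θ φ) :
    (1 : Matrix V V ℝ) ∈ distFlag G φ (D + 1) := by
  have one_eq : (1 : Matrix V V ℝ) = distMatrix G (Pi.single 0 1) := by
    ext x y
    simp [one_apply, Pi.single_apply, hG.connected.dist_eq_zero_iff]
  rw [one_eq]
  exact distMatrix_mem_distFlag hG.dist_le hG.injOn_dual _

lemma exists_distMatrix_eq_aeval (hG : IsQPolynomial G D θ φ) (P : ℝ[X]) :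
    ∃ f, distMatrix G f = aeval (G.adjMatrix ℝ) P := by
  have h := hG.isTriangularFlag.aeval_mul_mem P hG.one_mem_distFlag
  rw [mul_one] at h
  obtain ⟨Q, -, hQ⟩ := mem_distFlag.1 h
  exact ⟨_, hQ⟩

lemma transpose_aeval (hG : IsQPolynomial G D θ φ) (P : ℝ[X]) :
    (aeval (G.adjMatrix ℝ) P)ᵀ = aeval (G.adjMatrix ℝ) P := by
  obtain ⟨f, hf⟩ := hG.exists_distMatrix_eq_aeval P
  rw [← hf, transpose_distMatrix]

lemma transpose_spectralProj (hG : IsQPolynomial G D θ φ) (N i : ℕ) :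
    (spectralProj (G.adjMatrix ℝ) θ N i)ᵀ = spectralProj (G.adjMatrix ℝ) θ N i :=
  hG.transpose_aeval _

/- If `θ i = θ j`, the product of the factors other than `X - θ i` has a square divisible by the
annihilating polynomial; as `A` is symmetric, that product already annihilates `A`, although its
degree is only `D`. -/
lemma injOn_eigenvalue (hG : IsQPolynomial G D θ φ) : Set.InjOn θ (range (D + 1)) := by
  intro i hi j hj hij
  by_contra hne
  rw [mem_coe] at hi hj
  have hj' : j ∈ (range (D + 1)).erase i := mem_erase.2 ⟨Ne.symm hne, hj⟩
  set Q := Lagrange.nodal ((range (D + 1)).erase i) θ with hQ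
  have hdvd : Lagrange.nodal (range (D + 1)) θ ∣ Q * Q := by
    rw [Lagrange.nodal_eq_mul_nodal_erase hi, hij]
    exact mul_dvd_mul_right (Lagrange.X_sub_C_dvd_nodal θ hj') Q
  have hQQ : aeval (G.adjMatrix ℝ) Q * aeval (G.adjMatrix ℝ) Q = 0 := by
    rw [← map_mul]
    exact aeval_eq_zero_of_dvd_aeval_eq_zero hdvd
      (hG.isTriangularFlag.aeval_nodal_range_eq_zero hG.one_mem_distFlag)
  obtain ⟨x, y, hxy⟩ := hG.exists_dist_eq
  refine aeval_adjMatrix_ne_zero hG.connected (P := Q) Lagrange.nodal_monic (x := x) (y := y) ?_ ?_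
  · rw [hQ, Lagrange.natDegree_nodal, card_erase_of_mem hi, card_range, Nat.add_sub_cancel, hxy]
  · rw [← conjTranspose_mul_self_eq_zero, conjTranspose_eq_transpose_of_trivial,
      hG.transpose_aeval, hQQ]

lemma exists_aeval_eq_distMatrix_single (hG : IsQPolynomial G D θ φ) (n : ℕ) :
    ∃ P : ℝ[X], aeval (G.adjMatrix ℝ) P = distMatrix G (Pi.single n 1) := by
  induction n using Nat.strong_induction_on with
  | _ n ih =>
    choose! P hP using ih
    by_cases hn : ∃ x y, G.dist x y = n
    · obtain ⟨x, y, hxy⟩ := hn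
      obtain ⟨g, hg⟩ := hG.exists_distMatrix_eq_aeval (X ^ n)
      rw [map_pow, aeval_X] at hg
      have hgn : g n ≠ 0 := by
        have h := adjMatrix_pow_dist_apply_ne_zero hG.connected x y
        rwa [hxy, ← hg, distMatrix_apply, hxy] at h
      refine ⟨C (g n)⁻¹ * (X ^ n - ∑ h ∈ range n, C (g h) * P h), ?_⟩
      rw [map_mul, map_sub, map_pow, aeval_X, map_sum, ← hg]
      simp only [map_mul, aeval_C, ← Algebra.smul_def]
      rw [sum_congr rfl fun h hh => by rw [hP h (mem_range.1 hh)]]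
      ext u v
      simp only [Matrix.smul_apply, Matrix.sub_apply, Matrix.sum_apply, distMatrix_apply,
        Pi.single_apply, smul_eq_mul, mul_ite, mul_one, mul_zero, sum_ite_eq, mem_range]
      rcases lt_trichotomy (G.dist u v) n with h | h | h
      · simp [h, h.ne]
      · simp [h, hgn]
      · have hguv : g (G.dist u v) = 0 := by
          rw [← distMatrix_apply (G := G) g, hg, adjMatrix_pow_apply_eq_zero h]
        simp [hguv, h.ne']
    · push Not at hn
      refine ⟨0, ?_⟩
      ext x y
      simp [hn x y]

lemma exists_aeval_eq_distMatrix (hG : IsQPolynomial G D θ φ) (f : ℕ → ℝ) :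
    ∃ P : ℝ[X], aeval (G.adjMatrix ℝ) P = distMatrix G f := by
  choose P hP using hG.exists_aeval_eq_distMatrix_single
  refine ⟨∑ h ∈ range (D + 1), C (f h) * P h, ?_⟩
  simp only [map_sum, map_mul, aeval_C, ← Algebra.smul_def, hP]
  ext x y
  simp [Matrix.sum_apply, Pi.single_apply, hG.dist_le x y]

lemma distMatrix_mul_mem (hG : IsQPolynomial G D θ φ) (f : ℕ → ℝ) {n : ℕ} {M : Matrix V V ℝ}
    (hM : M ∈ distFlag G φ n) : distMatrix G f * M ∈ distFlag G φ n := by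
  obtain ⟨P, hP⟩ := hG.exists_aeval_eq_distMatrix f
  exact hP ▸ hG.isTriangularFlag.aeval_mul_mem P hM

/- The vanishing of the Krein parameters `q^i_{1j}`: the entrywise product of `E_j` with a
polynomial of degree one in the dual eigenvalues is killed by `E_i`. -/
lemma spectralProj_mul_diagonal_mul_spectralProj_of_lt (hG : IsQPolynomial G D θ φ) {i j : ℕ}
    (hi : i ≤ D) (hij : j + 1 < i) (w : V) :
    spectralProj (G.adjMatrix ℝ) θ (D + 1) i * diagonal (distMatrix G φ w) *
      spectralProj (G.adjMatrix ℝ) θ (D + 1) j = 0 := by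
  have hW := hG.isTriangularFlag
  set E := spectralProj (G.adjMatrix ℝ) θ (D + 1)
  have hE : E j * E j ∈ distFlag G φ (j + 1) :=
    hW.aeval_mul_mem _ (hW.spectralProj_mem hG.one_mem_distFlag (by omega))
  have hdual : distMatrix G φ * distMatrix G φ ∈ distFlag G φ 2 :=
    hG.distMatrix_mul_mem φ distMatrix_mem_distFlag_two
  have krein : E i * ((E j * E j) ⊙ (distMatrix G φ * distMatrix G φ)) = 0 :=
    hW.spectralProj_mul_eq_zero (by omega)
      (hW.mono (by omega : j + 1 + 1 ≤ i) (hadamard_mem_distFlag hE hdual))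
  apply mul_diagonal_mul_eq_zero_of_mul_hadamard_eq_zero
  rw [transpose_distMatrix, hG.transpose_spectralProj, hG.transpose_spectralProj,
    Matrix.mul_assoc, krein, mul_zero]

lemma spectralProj_mul_diagonal_mul_spectralProj (hG : IsQPolynomial G D θ φ) {i j : ℕ}
    (hi : i ≤ D) (hj : j ≤ D) (hij : i + 1 < j ∨ j + 1 < i) (w : V) :
    spectralProj (G.adjMatrix ℝ) θ (D + 1) i * diagonal (distMatrix G φ w) *
      spectralProj (G.adjMatrix ℝ) θ (D + 1) j = 0 := by
  obtain hij | hij := hij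
  · have h := congrArg transpose (hG.spectralProj_mul_diagonal_mul_spectralProj_of_lt hj hij w)
    rwa [transpose_mul, transpose_mul, hG.transpose_spectralProj, hG.transpose_spectralProj,
      diagonal_transpose, transpose_zero, ← Matrix.mul_assoc] at h
  · exact hG.spectralProj_mul_diagonal_mul_spectralProj_of_lt hi hij w

theorem isBalanced (hG : IsQPolynomial G D θ φ) : IsBalanced G φ := by
  intro i j
  have hW := hG.isTriangularFlag
  have expand := hW.aeval_eq_sum_spectralProj hG.one_mem_distFlag hG.injOn_eigenvalue
  obtain ⟨P, hP⟩ := hG.exists_aeval_eq_distMatrix_single i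
  obtain ⟨Q, hQ⟩ := hG.exists_aeval_eq_distMatrix_single j
  obtain ⟨l, hl⟩ := exists_mul_sub_mul_eq_commutator (K := ℝ) (by simpa using (expand 1).symm)
    (fun i => P.eval (θ i)) (fun i => Q.eval (θ i))
  obtain ⟨L, hL⟩ := hG.exists_distMatrix_eq_aeval
    (Lagrange.interpolate (range (D + 1)) θ l)
  have hlL : ∑ i ∈ range (D + 1), l i • spectralProj (G.adjMatrix ℝ) θ (D + 1) i =
      distMatrix G L := by
    simp [hL, Lagrange.interpolate_apply, spectralProj, Algebra.smul_def]
  refine ⟨-L, fun x y w => ?_⟩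
  have h := hl (diagonal (distMatrix G φ w)) fun i hi j hj hij =>
    hG.spectralProj_mul_diagonal_mul_spectralProj (by omega) (by omega) hij w
  rw [← expand P, ← expand Q, hP, hQ, hlL] at h
  have hxy := congrFun₂ h x y
  simp only [Matrix.sub_apply, distMatrix_mul_diagonal_mul_apply, mul_diagonal, diagonal_mul,
    distMatrix_apply] at hxy
  rw [hxy, G.dist_comm (u := x) (v := w), G.dist_comm (u := y) (v := w), Pi.neg_apply]
  ring

end IsQPolynomial

end QPolynomial

section ClassicalParameters

open Matrix

/- With `s = 1 + b > 1`, positivity of `c₄` forces `a₂ = 1`, and then `a₃ - c₃ - c₂ + 1 = 2 / s`. -/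
lemma lt_neg_one_of_intersectionNumbers {b α : ℝ} {a₂ a₃ c₂ c₃ : ℕ} (hb : b ≠ -1) (h₂ : a₂ ≠ 0)
    (ha₂ : (a₂ : ℝ) = -(1 + b) ^ 2 * α) (hc₂ : (c₂ : ℝ) = (1 + b) * (1 + α))
    (ha₃ : (a₃ : ℝ) = a₂ * (1 + b + b ^ 2))
    (hc₃ : (c₃ : ℝ) = (1 + b + b ^ 2) * (1 + α * (1 + b)))
    (hc₄ : 0 < (1 + b + b ^ 2 + b ^ 3) * (1 + α * (1 + b + b ^ 2))) : b < -1 := by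
  by_contra! hle
  have hs : 0 < 1 + b := by linarith [lt_of_le_of_ne hle hb.symm]
  have h₄ : 0 < 1 + α * (1 + b + b ^ 2) := by
    rw [show 1 + b + b ^ 2 + b ^ 3 = (1 + b) * (1 + b ^ 2) by ring] at hc₄
    exact pos_of_mul_pos_right hc₄ (by positivity)
  have a₂_mul_lt : a₂ * (1 + b + b ^ 2) < (1 + b) ^ 2 := by
    linear_combination (1 + b) ^ 2 * h₄ + (1 + b + b ^ 2) * ha₂
  have bracket_pos : 0 < 1 + b + b ^ 2 := by nlinarith
  have a₂_eq_one : a₂ = 1 := by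
    refine le_antisymm (Nat.le_of_lt_succ ?_) (Nat.one_le_iff_ne_zero.2 h₂)
    by_contra! hge
    have hge' : (2 : ℝ) ≤ a₂ := mod_cast hge
    nlinarith
  subst a₂_eq_one
  push_cast at ha₂ ha₃ a₂_mul_lt
  have hbpos : 0 < b := by linarith
  have mul_eq_two : (1 + b) * (a₃ - c₃ - c₂ + 1 : ℤ) = 2 := by
    push_cast
    rw [ha₃, hc₃, hc₂]
    linear_combination (-(1 + b + b ^ 2) - 1) * ha₂
  have eq_one : (a₃ - c₃ - c₂ + 1 : ℤ) = 1 := by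
    have hpos : (0 : ℝ) < (a₃ - c₃ - c₂ + 1 : ℤ) := by
      by_contra! h
      nlinarith
    have hlt : ((a₃ - c₃ - c₂ + 1 : ℤ) : ℝ) < 2 := by nlinarith
    have hpos' : 0 < (a₃ - c₃ - c₂ + 1 : ℤ) := mod_cast hpos
    have hlt' : (a₃ - c₃ - c₂ + 1 : ℤ) < 2 := mod_cast hlt
    omega
  rw [eq_one, Int.cast_one, mul_one] at mul_eq_two
  have two_mul_c₂ : 2 * (c₂ : ℝ) = 3 := by
    obtain rfl : b = 1 := by linarith
    linarith
  have : 2 * c₂ = 3 := mod_cast two_mul_c₂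
  omega

lemma exists_bracket_eq_quadratic {b : ℝ} (hb₀ : b ≠ 0) (hb₁ : b ≠ 1) (α β k : ℝ) (D j : ℕ) :
    ∃ l m n : ℝ, (j = 0 → m = 0) ∧ (j ≤ 1 → n = 0) ∧ ∀ h : ℕ,
      k + (b ^ j - 1) * (gaussBracket b h * (1 + α * gaussBracket b (h - 1))) +
          (b⁻¹ ^ j - 1) * ((gaussBracket b D - gaussBracket b h) * (β - α * gaussBracket b h)) =
        l + m * b ^ h + n * (b ^ h) ^ 2 := by
  have hb' : b - 1 ≠ 0 := sub_ne_zero.2 hb₁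
  refine ⟨k + (b ^ j - 1) * (-(1 / (b - 1)) * (1 - α / (b - 1)))
      + (b⁻¹ ^ j - 1) * (b ^ D / (b - 1) * (β + α / (b - 1))),
    (b ^ j - 1) * ((1 / (b - 1)) * (1 - α / (b - 1)) - α * b⁻¹ / (b - 1) ^ 2)
      + (b⁻¹ ^ j - 1) * (-(β + α / (b - 1)) / (b - 1) - α * b ^ D / (b - 1) ^ 2),
    (b ^ j - 1) * (α * b⁻¹ / (b - 1) ^ 2) + (b⁻¹ ^ j - 1) * (α / (b - 1) ^ 2), ?_, ?_, ?_⟩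
  · rintro rfl
    simp
  · intro hj
    interval_cases j
    · simp
    · field_simp
      ring
  · rintro (_ | h)
    · simp only [gaussBracket, geom_sum_eq hb₁]
      field_simp
      ring
    · simp only [gaussBracket, geom_sum_eq hb₁, Nat.add_sub_cancel]
      field_simp
      ring

variable {V : Type*} {G : SimpleGraph V} {D : ℕ} {p : ℕ → ℕ → ℕ → ℕ} {x y : V}

lemma exists_dist_eq_one_and_dist_eq (hG : G.Connected) {n : ℕ} (h : G.dist x y = n + 1) :
    ∃ z, G.dist x z = 1 ∧ G.dist y z = n := by
  obtain ⟨W, hW⟩ := hG.exists_walk_length_eq_dist x y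
  cases W with
  | nil => simp at h
  | @cons _ z _ hadj W' =>
    rw [SimpleGraph.Walk.length_cons] at hW
    have := SimpleGraph.dist_le W'
    have := SimpleGraph.dist_eq_one_iff_adj.2 hadj
    have := hG.dist_triangle (u := x) (v := z) (w := y)
    exact ⟨z, by omega, by rw [G.dist_comm]; omega⟩

lemma exists_dist_eq_of_le (hG : G.Connected) (hdiam : ∃ x y, G.dist x y = D) {h : ℕ}
    (hh : h ≤ D) : ∃ x y, G.dist x y = h := by
  induction hh using Nat.decreasingInduction with
  | self => exact hdiam
  | of_succ h _ ih =>
    obtain ⟨x, y, hxy⟩ := ih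
    obtain ⟨z, -, hz⟩ := exists_dist_eq_one_and_dist_eq hG hxy
    exact ⟨y, z, hz⟩

section Valency

variable [Fintype V]

lemma card_sphereInter (hdist : ∀ x y, G.dist x y ≤ D) (hG : G.IsDistRegularWith D p) (x y : V)
    {i j : ℕ} (hi : i ≤ D) (hj : j ≤ D) : #(sphereInter G x y i j) = p (G.dist x y) i j := by
  rw [← hG _ i j (hdist x y) hi hj x y rfl, ← Set.ncard_coe_finset]
  congr 1
  ext z
  simp

lemma card_sphereInter_one (hdist : ∀ x y, G.dist x y ≤ D) (hG : G.IsDistRegularWith D p)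
    (hD : 1 ≤ D) (hp : p D 1 (D + 1) = 0) (x y : V) {j : ℕ} (hj : j ≤ G.dist x y + 1) :
    #(sphereInter G x y 1 j) = p (G.dist x y) 1 j := by
  obtain hjD | hjD := le_or_gt j D
  · exact card_sphereInter hdist hG x y hD hjD
  · have hxy : G.dist x y = D := le_antisymm (hdist x y) (by omega)
    obtain rfl : j = D + 1 := by omega
    rw [hxy, hp, card_eq_zero, eq_empty_iff_forall_notMem]
    intro z hz
    have := hdist y z
    have := (mem_sphereInter.1 hz).2
    omega

lemma sum_neighborFinset_dist [DecidableRel G.Adj] (hG : G.Connected) (x y : V) (f : ℕ → ℝ) :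
    ∑ z ∈ G.neighborFinset x, f (G.dist z y) =
      ∑ j ∈ range (G.dist x y + 2), #(sphereInter G x y 1 j) * f j := by
  have maps_to : ∀ z ∈ G.neighborFinset x, G.dist z y ∈ range (G.dist x y + 2) := by
    intro z hz
    have := SimpleGraph.dist_eq_one_iff_adj.2 ((G.mem_neighborFinset x z).1 hz)
    have := hG.dist_triangle (u := z) (v := x) (w := y)
    rw [G.dist_comm (u := z) (v := x)] at this
    exact mem_range.2 (by omega)
  rw [← sum_fiberwise_of_maps_to maps_to]
  refine sum_congr rfl fun j _ => ?_
  have filter_eq : (G.neighborFinset x).filter (G.dist · y = j) = sphereInter G x y 1 j := by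
    ext z
    simp [SimpleGraph.dist_eq_one_iff_adj, G.dist_comm (u := z)]
  rw [← filter_eq, ← nsmul_eq_mul, ← sum_const]
  exact sum_congr rfl fun z hz => by rw [(mem_filter.1 hz).2]

lemma adjMatrix_mul_distMatrix [DecidableRel G.Adj] (hG : G.Connected)
    (hp : ∀ x y, ∀ j ≤ G.dist x y + 1, #(sphereInter G x y 1 j) = p (G.dist x y) 1 j)
    (hp₀ : p 0 1 0 = 0) (f : ℕ → ℝ) :
    G.adjMatrix ℝ * distMatrix G f = distMatrix G fun h =>
      p h 1 (h - 1) * f (h - 1) + p h 1 h * f h + p h 1 (h + 1) * f (h + 1) := by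
  ext x y
  simp only [SimpleGraph.adjMatrix_mul_apply, distMatrix_apply, sum_neighborFinset_dist hG]
  rw [sum_congr rfl fun j hj => by rw [hp x y j (Nat.le_of_lt_succ (mem_range.1 hj))],
    sum_range_succ, sum_range_succ]
  congr 2
  rcases hxy : G.dist x y with _ | h
  · simp [hp₀]
  · refine sum_eq_single_of_mem h (self_mem_range_succ h) fun j hj hne => ?_
    rw [← hxy, ← hp x y j (by grind), mul_eq_zero, Nat.cast_eq_zero, card_eq_zero]
    refine .inl (eq_empty_of_forall_notMem fun z hz => ?_)
    rw [mem_sphereInter] at hz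
    have := hG.dist_triangle (u := x) (v := z) (w := y)
    rw [G.dist_comm (u := z)] at this
    grind

lemma intersectionNumber_sum (hG : G.Connected)
    (hp : ∀ x y, ∀ j ≤ G.dist x y + 1, #(sphereInter G x y 1 j) = p (G.dist x y) 1 j)
    (hp₀ : p 0 1 0 = 0) (x y : V) :
    p (G.dist x y) 1 (G.dist x y - 1) + p (G.dist x y) 1 (G.dist x y) +
      p (G.dist x y) 1 (G.dist x y + 1) = p 0 1 1 := by
  classical
  have key := adjMatrix_mul_distMatrix hG hp hp₀ 1
  have hxx := congrFun₂ key x x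
  simp only [SimpleGraph.adjMatrix_mul_apply, distMatrix_apply, Pi.one_apply, mul_one,
    SimpleGraph.dist_self, Nat.zero_sub, hp₀] at hxx
  have hxy := congrFun₂ key x y
  simp only [SimpleGraph.adjMatrix_mul_apply, distMatrix_apply, Pi.one_apply, mul_one] at hxy
  rw [hxx] at hxy
  norm_num at hxy
  exact_mod_cast hxy.symm

end Valency

variable {V : Type*} [Fintype V] {G : SimpleGraph V}

lemma isTriangularFlag_distFlag [DecidableEq V] {A : Matrix V V ℝ} {θ φ : ℕ → ℝ}
    (hA : ∀ j, A * distMatrix G (φ ^ j) - θ j • distMatrix G (φ ^ j) ∈ distFlag G φ j) :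
    IsTriangularFlag A θ (distFlag G φ) where
  zero_eq_bot := by
    refine (Submodule.eq_bot_iff _).2 fun M hM => ?_
    obtain ⟨P, hP, rfl⟩ := mem_distFlag.1 hM
    obtain rfl : P = 0 := by simpa using hP
    ext x y
    simp
  mono m n hmn := Submodule.map_mono (degreeLT_mono hmn)
  mul_sub_smul_mem {n M} hM := by
    obtain ⟨P, hP, rfl⟩ := mem_distFlag.1 hM
    have sum_pow : distMatrix G (fun h => P.eval (φ h)) =
        ∑ j ∈ range (n + 1), P.coeff j • distMatrix G (φ ^ j) := by
      have hP' : P.natDegree < n + 1 :=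
        Nat.lt_succ_of_le (natDegree_le_of_degree_le (Order.le_of_lt_succ hP))
      ext x y
      simp [eval_eq_sum_range' hP', Matrix.sum_apply]
    rw [sum_pow, mul_sum, smul_sum, ← sum_sub_distrib]
    refine sum_mem fun j hj => ?_
    rw [Matrix.mul_smul, smul_comm, ← smul_sub]
    refine Submodule.smul_mem _ _ ?_
    obtain rfl | hj := (Nat.le_of_lt_succ (mem_range.1 hj)).eq_or_lt
    · exact hA j
    · have pow_mem : distMatrix G (φ ^ j) ∈ distFlag G φ n :=
        mem_distFlag.2 ⟨X ^ j, by rw [degree_X_pow]; exact_mod_cast hj, by simp; rfl⟩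
      rw [← sub_add_sub_cancel _ (θ j • distMatrix G (φ ^ j)), ← sub_smul]
      exact add_mem (Submodule.map_mono (degreeLT_mono hj.le) (hA j))
        (Submodule.smul_mem _ _ pow_mem)

variable {D : ℕ} {p : ℕ → ℕ → ℕ → ℕ} {b α β : ℝ}

lemma HasClassicalParams.top_eq_zero (hp : HasClassicalParams D p b α β) : p D 1 (D + 1) = 0 := by
  simpa using hp.2.2.2 D le_rfl

lemma HasClassicalParams.zero_eq_zero (hp : HasClassicalParams D p b α β) : p 0 1 0 = 0 := by
  simpa [gaussBracket] using hp.2.2.1 0 D.zero_le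

lemma HasClassicalParams.exists_threeTerm_eq (hp : HasClassicalParams D p b α β) (hb : b ≠ 1)
    (k : ℝ) (j : ℕ) : ∃ l : ℝ, ∃ P : ℝ[X], P.degree < j ∧ ∀ h ≤ D,
      p h 1 (h - 1) * (b⁻¹ ^ (h - 1)) ^ j + (k - p h 1 (h - 1) - p h 1 (h + 1)) * (b⁻¹ ^ h) ^ j +
          p h 1 (h + 1) * (b⁻¹ ^ (h + 1)) ^ j = l * (b⁻¹ ^ h) ^ j + P.eval (b⁻¹ ^ h) := by
  obtain ⟨l, m, n, hm, hn, key⟩ := exists_bracket_eq_quadratic hp.1 hb α β k D j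
  refine ⟨l, C m * X ^ (j - 1) + C n * X ^ (j - 2), ?_, fun h hh => ?_⟩
  · rcases j with _ | _ | j
    · simp [hm, hn]
    · simpa [hn] using degree_C_lt
    · refine (degree_add_le _ _).trans_lt (max_lt ?_ ?_) <;>
        exact (degree_C_mul_X_pow_le _ _).trans_lt (mod_cast by omega)
  · have pow_mul_pow : b ^ h * b⁻¹ ^ h = 1 := by rw [← mul_pow, mul_inv_cancel₀ hp.1, one_pow]
    have pred : (p h 1 (h - 1) : ℝ) * (b⁻¹ ^ (h - 1)) ^ j =
        p h 1 (h - 1) * (b ^ j * (b⁻¹ ^ h) ^ j) := by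
      rcases h with _ | h
      · simp [hp.zero_eq_zero]
      · rw [Nat.add_sub_cancel, ← mul_pow, pow_succ', mul_inv_cancel_left₀ hp.1]
    have reduce_m : m * b ^ h * (b⁻¹ ^ h) ^ j = m * (b⁻¹ ^ h) ^ (j - 1) := by
      rcases j with _ | j
      · simp [hm]
      · rw [Nat.add_sub_cancel, pow_succ]
        linear_combination m * (b⁻¹ ^ h) ^ j * pow_mul_pow
    have reduce_n : n * (b ^ h) ^ 2 * (b⁻¹ ^ h) ^ j = n * (b⁻¹ ^ h) ^ (j - 2) := by
      rcases j with _ | _ | j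
      · simp [hn]
      · simp [hn]
      · rw [show j + 1 + 1 - 2 = j by omega, pow_add, pow_add]
        linear_combination
          n * (b⁻¹ ^ h) ^ j * (b ^ h * b⁻¹ ^ h + 1) * pow_mul_pow
    have key := key h
    rw [← hp.2.2.1 h hh, ← hp.2.2.2 h hh] at key
    rw [pred, pow_succ b⁻¹ h, mul_pow]
    simp only [eval_add, eval_mul, eval_C, eval_pow, eval_X]
    linear_combination (b⁻¹ ^ h) ^ j * key + reduce_m + reduce_n

theorem HasClassicalParams.exists_isQPolynomial [DecidableEq V] [DecidableRel G.Adj]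
    (hp : HasClassicalParams D p b α β) (hG : G.Connected) (hdist : ∀ x y, G.dist x y ≤ D)
    (hdiam : ∃ x y, G.dist x y = D) (hD : 1 ≤ D) (hdr : G.IsDistRegularWith D p) (hb : b ≠ 1) :
    ∃ θ, IsQPolynomial G D θ (b⁻¹ ^ ·) := by
  choose θ P hP key using hp.exists_threeTerm_eq hb (p 0 1 1)
  have hcard := fun x y j => card_sphereInter_one hdist hdr hD hp.top_eq_zero x y (j := j)
  refine ⟨θ, hG, hdist, hdiam, ?_, isTriangularFlag_distFlag fun j => ?_⟩
  · have hinj : Function.Injective fun h : ℕ => |b⁻¹| ^ h := by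
      refine pow_right_injective₀ (by simpa using hp.1) ?_
      rw [abs_inv, Ne, inv_eq_one, abs_eq zero_le_one]
      exact not_or.2 ⟨hb, hp.2.1⟩
    exact fun h _ h' _ heq => hinj (by simpa only [abs_pow] using congrArg abs heq)
  · refine mem_distFlag.2 ⟨P j, hP j, ?_⟩
    rw [adjMatrix_mul_distMatrix hG hcard hp.zero_eq_zero]
    ext x y
    have hsum : (_ : ℝ) = _ :=
      congrArg Nat.cast (intersectionNumber_sum hG hcard hp.zero_eq_zero x y)
    push_cast at hsum
    simp only [distMatrix_apply, Matrix.sub_apply, Matrix.smul_apply, smul_eq_mul, Pi.pow_apply]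
    linear_combination -key j _ (hdist x y) - ((b⁻¹ ^ G.dist x y) ^ j) * hsum

lemma HasClassicalParams.a_eq (hp : HasClassicalParams D p b α β)
    (hsum : ∀ h ≤ D, p h 1 (h - 1) + p h 1 h + p h 1 (h + 1) = p 0 1 1) (h₁ : p 1 1 1 = 0)
    (hD : 1 ≤ D) {h : ℕ} (hh : h ≤ D) : (p h 1 h : ℝ) =
      α * gaussBracket b h * (1 - gaussBracket b h - gaussBracket b (h - 1)) := by
  have e₀ := hp.2.2.2 0 D.zero_le
  have c₁ := hp.2.2.1 1 hD
  have e₁ := hp.2.2.2 1 hD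
  have s₁ : (_ : ℝ) = _ := congrArg Nat.cast (hsum 1 hD)
  have sh : (_ : ℝ) = _ := congrArg Nat.cast (hsum h hh)
  have g₀ : gaussBracket b 0 = 0 := by simp [gaussBracket]
  have g₁ : gaussBracket b 1 = 1 := by simp [gaussBracket]
  push_cast [h₁] at s₁ sh
  simp only [g₀, g₁, Nat.sub_self, zero_add] at e₀ c₁ e₁ s₁
  linear_combination sh - hp.2.2.1 h hh - hp.2.2.2 h hh + e₀ * (1 - gaussBracket b h) +
    gaussBracket b h * (c₁ + e₁ - s₁)

lemma HasClassicalParams.a_two_eq (hp : HasClassicalParams D p b α β)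
    (hsum : ∀ h ≤ D, p h 1 (h - 1) + p h 1 h + p h 1 (h + 1) = p 0 1 1) (h₁ : p 1 1 1 = 0)
    (hD : 2 ≤ D) : (p 2 1 2 : ℝ) = -(1 + b) ^ 2 * α := by
  rw [hp.a_eq hsum h₁ (by omega) hD]
  simp only [gaussBracket, sum_range_succ, sum_range_zero]
  ring

lemma HasClassicalParams.c_two_eq (hp : HasClassicalParams D p b α β) (hD : 2 ≤ D) :
    (p 2 1 1 : ℝ) = (1 + b) * (1 + α) := by
  simpa [gaussBracket, sum_range_succ] using hp.2.2.1 2 hD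

lemma HasClassicalParams.lt_neg_one (hp : HasClassicalParams D p b α β)
    (hsum : ∀ h ≤ D, p h 1 (h - 1) + p h 1 h + p h 1 (h + 1) = p 0 1 1) (h₁ : p 1 1 1 = 0)
    (h₂ : p 2 1 2 ≠ 0) (hD : 4 ≤ D) (h₄ : 0 < p 4 1 3) : b < -1 := by
  have c₃_eq := hp.2.2.1 3 (by omega)
  have c₄_eq := hp.2.2.1 4 hD
  have a₃_eq := hp.a_eq hsum h₁ (by omega) (h := 3) (by omega)
  simp only [gaussBracket, sum_range_succ, sum_range_zero, Nat.reduceSub, zero_add, pow_zero,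
    pow_one] at c₃_eq c₄_eq a₃_eq
  have a₂_eq := hp.a_two_eq hsum h₁ (by omega)
  refine lt_neg_one_of_intersectionNumbers hp.2.1 h₂ a₂_eq (hp.c_two_eq (by omega))
    (a₃ := p 3 1 3) (c₃ := p 3 1 2) ?_ c₃_eq ?_
  · rw [a₃_eq, a₂_eq]
    ring
  · rw [← c₄_eq]
    exact_mod_cast h₄

/-- The consequences of classical parameters with `a₁ = 0 ≠ a₂` on which the geometric argument
rests; `a i` stands for the intersection number `a_i`. Graphs with classical parameters and
`b < -1` are said to be of negative type. -/
structure IsNegativeType (G : SimpleGraph V) (b : ℝ) (a : ℕ → ℕ) (c₂ : ℕ) : Prop where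
  connected : G.Connected
  card_sphereInter_dist : ∀ x y, #(sphereInter G x y 1 (G.dist x y)) = a (G.dist x y)
  card_sphereInter_one_one : ∀ {x y}, G.dist x y = 2 → #(sphereInter G x y 1 1) = c₂
  a_one : a 1 = 0
  lt_neg_one : b < -1
  a_two : (a 2 : ℝ) = (1 + b) * (1 + b - c₂)
  isBalanced : IsBalanced G (b⁻¹ ^ ·)

theorem HasClassicalParams.isNegativeType (hp : HasClassicalParams D p b α β)
    (hG : G.Connected) (hdist : ∀ x y, G.dist x y ≤ D) (hdiam : ∃ x y, G.dist x y = D)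
    (hdr : G.IsDistRegularWith D p) (hD : 4 ≤ D) (h₁ : p 1 1 1 = 0) (h₂ : p 2 1 2 ≠ 0) :
    IsNegativeType G b (fun h => p h 1 h) (p 2 1 1) := by
  classical
  have hD' : 1 ≤ D := by omega
  have hcard := fun x y j => card_sphereInter_one hdist hdr hD' hp.top_eq_zero x y (j := j)
  have hsum : ∀ h ≤ D, p h 1 (h - 1) + p h 1 h + p h 1 (h + 1) = p 0 1 1 := by
    intro h hh
    obtain ⟨x, y, rfl⟩ := exists_dist_eq_of_le hG hdiam hh
    exact intersectionNumber_sum hG hcard hp.zero_eq_zero x y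
  have c₄_pos : 0 < p 4 1 3 := by
    obtain ⟨x, y, hxy⟩ := exists_dist_eq_of_le hG hdiam hD
    obtain ⟨z, hxz, hyz⟩ := exists_dist_eq_one_and_dist_eq hG hxy
    rw [← hxy, ← hcard x y 3 (by omega), card_pos]
    exact ⟨z, mem_sphereInter.2 ⟨hxz, hyz⟩⟩
  have hb : b < -1 := hp.lt_neg_one hsum h₁ h₂ hD c₄_pos
  obtain ⟨θ, hθ⟩ := hp.exists_isQPolynomial hG hdist hdiam hD' hdr (by linarith)
  exact
    { connected := hG
      card_sphereInter_dist := fun x y => hcard x y _ (Nat.le_succ _)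
      card_sphereInter_one_one := fun {x y} h => h ▸ hcard x y 1 (by omega)
      a_one := h₁
      lt_neg_one := hb
      a_two := by
        rw [hp.a_two_eq hsum h₁ (by omega), hp.c_two_eq (by omega)]
        ring
      isBalanced := hθ.isBalanced }

end ClassicalParameters

section NegativeType

lemma sum_pow_of_eq_or_eq_succ {ι : Type*} {s : Finset ι} {f : ι → ℕ} {i : ℕ}
    (hf : ∀ z ∈ s, f z = i ∨ f z = i + 1) (q : ℝ) :
    ∑ z ∈ s, q ^ f z = #s * q ^ i + #{z ∈ s | f z = i + 1} * (q ^ (i + 1) - q ^ i) := by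
  rw [← nsmul_eq_mul, ← nsmul_eq_mul, ← sum_const, ← sum_const, sum_filter, ← sum_add_distrib]
  refine sum_congr rfl fun z hz => ?_
  obtain h | h := hf z hz <;> simp [h]

lemma sum_pow_of_eq {ι : Type*} {s : Finset ι} {f : ι → ℕ} {i : ℕ} (hf : ∀ z ∈ s, f z = i)
    (q : ℝ) : ∑ z ∈ s, q ^ f z = #s * q ^ i := by
  rw [sum_congr rfl fun z hz => by rw [hf z hz], sum_const, nsmul_eq_mul]

variable {V : Type*} [Fintype V] {G : SimpleGraph V}

lemma sphereInter_comm (x y : V) (i j : ℕ) : sphereInter G x y i j = sphereInter G y x j i := by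
  ext z
  simp [and_comm]

lemma dist_le_and_dist_le_of_mem_sphereInter (hG : G.Connected) {x y z : V} {i j : ℕ}
    (hz : z ∈ sphereInter G x y i j) (w : V) :
    G.dist x w ≤ i + G.dist z w ∧ G.dist z w ≤ j + G.dist y w := by
  obtain ⟨rfl, rfl⟩ := mem_sphereInter.1 hz
  exact ⟨hG.dist_triangle, G.dist_comm (u := z) (v := y) ▸ hG.dist_triangle⟩

namespace IsNegativeType

variable {a : ℕ → ℕ} {b : ℝ} {c₂ i j : ℕ} {g u v w x y z : V}

lemma inv_neg (hG : IsNegativeType G b a c₂) : b⁻¹ < 0 :=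
  inv_lt_zero.2 (by linarith [hG.lt_neg_one])

lemma neg_one_lt_inv (hG : IsNegativeType G b a c₂) : -1 < b⁻¹ := by
  rw [lt_inv_of_neg (by norm_num) (by linarith [hG.lt_neg_one])]
  linarith [hG.lt_neg_one]

lemma one_sub_inv_pow_pos (hG : IsNegativeType G b a c₂) (hi : i ≠ 0) : 0 < 1 - b⁻¹ ^ i := by
  have : |b⁻¹| < 1 := abs_lt.2 ⟨hG.neg_one_lt_inv, by linarith [hG.inv_neg]⟩
  have := pow_lt_one₀ (abs_nonneg _) this hi
  rw [← abs_pow] at this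
  linarith [le_abs_self (b⁻¹ ^ i)]

lemma a_two_mul_inv (hG : IsNegativeType G b a c₂) : a 2 * b⁻¹ = (1 + b - c₂) * (1 + b⁻¹) := by
  rw [hG.a_two]
  linear_combination (1 + b - c₂) * mul_inv_cancel₀ (by linarith [hG.lt_neg_one] : b ≠ 0)

lemma one_add_sub_neg (hG : IsNegativeType G b a c₂) : 1 + b - c₂ < 0 := by
  linarith [hG.lt_neg_one, c₂.cast_nonneg (α := ℝ)]

lemma a_two_pos (hG : IsNegativeType G b a c₂) : 0 < a 2 := by
  have : (0 : ℝ) < a 2 := by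
    rw [hG.a_two]
    exact mul_pos_of_neg_of_neg (by linarith [hG.lt_neg_one]) hG.one_add_sub_neg
  exact_mod_cast this

lemma card_sphereInter_of_dist_eq (hG : IsNegativeType G b a c₂) (h : G.dist x y = i) :
    #(sphereInter G x y 1 i) = a i :=
  h ▸ hG.card_sphereInter_dist x y

lemma dist_eq_two_of_commonNeighbor (hG : IsNegativeType G b a c₂) (hx : G.dist z x = 1)
    (hy : G.dist z y = 1) (hne : x ≠ y) : G.dist x y = 2 := by
  have h₀ : G.dist x y ≠ 0 := fun h => hne (hG.connected.dist_eq_zero_iff.1 h)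
  have h₁ : G.dist x y ≠ 1 := by
    intro h
    have hcard := hG.card_sphereInter_of_dist_eq h
    rw [hG.a_one, card_eq_zero] at hcard
    refine notMem_empty z (hcard ▸ mem_sphereInter.2 ?_)
    exact ⟨by rw [G.dist_comm, hx], by rw [G.dist_comm, hy]⟩
  have := hG.connected.dist_triangle (u := x) (v := z) (w := y)
  have := G.dist_comm (u := x) (v := z)
  omega

/- The constants of the balanced set condition are determined by the case `w = y`. -/
lemma sum_sub_sum_mul (hG : IsNegativeType G b a c₂) (hxy : G.dist x y = i) (w : V) :
    (∑ z ∈ sphereInter G x y 1 i, b⁻¹ ^ G.dist z w -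
        ∑ z ∈ sphereInter G y x 1 i, b⁻¹ ^ G.dist z w) * (1 - b⁻¹ ^ i) =
      a i * (b⁻¹ - b⁻¹ ^ i) * (b⁻¹ ^ G.dist x w - b⁻¹ ^ G.dist y w) := by
  obtain ⟨L, hL⟩ := hG.isBalanced 1 i
  have hyx : G.dist y x = i := by rw [G.dist_comm, hxy]
  have hLy := hL x y y
  rw [sum_pow_of_eq (i := i) (fun z hz => by rw [G.dist_comm]; exact (mem_sphereInter.1 hz).2),
    sum_pow_of_eq (i := 1) (fun z hz => by rw [G.dist_comm]; exact (mem_sphereInter.1 hz).2),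
    sphereInter_comm x y i 1, hG.card_sphereInter_of_dist_eq hxy,
    hG.card_sphereInter_of_dist_eq hyx, SimpleGraph.dist_self, hxy] at hLy
  rw [sphereInter_comm y x 1 i, hL x y w, hxy]
  linear_combination (b⁻¹ ^ G.dist x w - b⁻¹ ^ G.dist y w) * hLy

lemma sum_sub_sum (hG : IsNegativeType G b a c₂) (hxy : G.dist x y = 2) (w : V) :
    ∑ z ∈ sphereInter G x y 1 2, b⁻¹ ^ G.dist z w - ∑ z ∈ sphereInter G y x 1 2, b⁻¹ ^ G.dist z w =
      (1 + b - c₂) * (b⁻¹ ^ G.dist x w - b⁻¹ ^ G.dist y w) := by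
  refine mul_right_cancel₀ (hG.one_sub_inv_pow_pos two_ne_zero).ne' ?_
  rw [hG.sum_sub_sum_mul hxy w]
  linear_combination (1 - b⁻¹) * (b⁻¹ ^ G.dist x w - b⁻¹ ^ G.dist y w) * hG.a_two_mul_inv

/- `v x u g` would be a parallelogram of length `i + 1` if `∂(u, x) = i`. -/
lemma dist_eq_succ_of_parallelogram (hG : IsNegativeType G b a c₂) (hi : i ≠ 0)
    (hvg : G.dist v g = i) (hgu : G.dist g u = 1) (hvu : G.dist v u = i + 1)
    (hvx : G.dist v x = 1) (hgx : G.dist g x = i) : G.dist x u = i + 1 := by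
  have hq := hG.inv_neg
  have dist_eq : ∀ z ∈ sphereInter G v g 1 i, G.dist z u = i ∨ G.dist z u = i + 1 := by
    intro z hz
    have := dist_le_and_dist_le_of_mem_sphereInter hG.connected hz u
    omega
  have dist_eq_two : ∀ z ∈ sphereInter G g v 1 i, G.dist z u = 2 := by
    intro z hz
    rw [mem_sphereInter] at hz
    refine hG.dist_eq_two_of_commonNeighbor hz.1 hgu ?_
    rintro rfl
    omega
  have key := hG.sum_sub_sum_mul hvg u
  rw [sum_pow_of_eq_or_eq_succ dist_eq, sum_pow_of_eq dist_eq_two,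
    hG.card_sphereInter_of_dist_eq hvg, hvu, hgu,
    hG.card_sphereInter_of_dist_eq (by rw [G.dist_comm, hvg])] at key
  have card_eq : #{z ∈ sphereInter G v g 1 i | G.dist z u = i + 1} = a i := by
    have : ((#{z ∈ sphereInter G v g 1 i | G.dist z u = i + 1} - a i : ℝ) *
        (b⁻¹ ^ i * (b⁻¹ - 1))) * (1 - b⁻¹ ^ i) = 0 := by
      linear_combination key
    have := (mul_eq_zero.1 this).resolve_right (hG.one_sub_inv_pow_pos hi).ne'
    have := (mul_eq_zero.1 this).resolve_right
      (mul_ne_zero (pow_ne_zero _ hq.ne) (by linarith))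
    exact_mod_cast sub_eq_zero.1 this
  rw [← hG.card_sphereInter_of_dist_eq hvg, card_filter_eq_iff] at card_eq
  exact card_eq x (mem_sphereInter.2 ⟨hvx, hgx⟩)

lemma dist_eq_of_dist_eq_add_two (hG : IsNegativeType G b a c₂) (hxy : G.dist x y = 2)
    (hyw : G.dist y w = j) (hxw : G.dist x w = j + 2) :
    (∀ z ∈ sphereInter G x y 1 2, G.dist z w = j + 2) ∧
      ∀ z ∈ sphereInter G y x 1 2, G.dist z w = j + 1 := by
  have hq := hG.inv_neg
  have dist_eq₁ : ∀ z ∈ sphereInter G x y 1 2, G.dist z w = j + 1 ∨ G.dist z w = j + 1 + 1 := by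
    intro z hz
    have := dist_le_and_dist_le_of_mem_sphereInter hG.connected hz w
    omega
  have dist_eq₂ : ∀ z ∈ sphereInter G y x 1 2, G.dist z w = j ∨ G.dist z w = j + 1 := by
    intro z hz
    rw [sphereInter_comm] at hz
    have := dist_le_and_dist_le_of_mem_sphereInter hG.connected hz w
    omega
  have key := hG.sum_sub_sum hxy w
  have card₁ := hG.card_sphereInter_of_dist_eq hxy
  have card₂ := hG.card_sphereInter_of_dist_eq ((G.dist_comm (u := y)).trans hxy)
  rw [sum_pow_of_eq_or_eq_succ dist_eq₁, sum_pow_of_eq_or_eq_succ dist_eq₂, card₁, card₂,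
    hxw, hyw] at key
  have le₁ := card_filter_le (sphereInter G x y 1 2) (G.dist · w = j + 1 + 1)
  have le₂ := card_filter_le (sphereInter G y x 1 2) (G.dist · w = j + 1)
  rw [card₁, ← Nat.cast_le (α := ℝ)] at le₁
  rw [card₂, ← Nat.cast_le (α := ℝ)] at le₂
  have balance : (a 2 - #{z ∈ sphereInter G y x 1 2 | G.dist z w = j + 1} : ℝ) =
      (a 2 - #{z ∈ sphereInter G x y 1 2 | G.dist z w = j + 1 + 1}) * b⁻¹ := by
    refine mul_right_cancel₀ (mul_ne_zero (pow_ne_zero j hq.ne) (by linarith : b⁻¹ - 1 ≠ 0)) ?_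
    linear_combination key - b⁻¹ ^ j * (b⁻¹ - 1) * hG.a_two_mul_inv
  have eq₁ : #{z ∈ sphereInter G x y 1 2 | G.dist z w = j + 1 + 1} = a 2 := by
    rw [← Nat.cast_inj (R := ℝ)]
    nlinarith
  have eq₂ : #{z ∈ sphereInter G y x 1 2 | G.dist z w = j + 1} = a 2 := by
    rw [eq₁, sub_self, zero_mul, sub_eq_zero] at balance
    exact_mod_cast balance.symm
  rw [← card₁, card_filter_eq_iff] at eq₁
  rw [← card₂, card_filter_eq_iff] at eq₂
  exact ⟨eq₁, eq₂⟩

end IsNegativeType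

/-- The neighbours of `x` at distance at most two from `y`. For `∂(x, y) = 2` this is the union of
`C(x, y)` and `A(x, y)`. -/
noncomputable def nearNeighbors (G : SimpleGraph V) (x y : V) : Finset V :=
  {z | G.dist x z = 1 ∧ G.dist y z ≤ 2}

lemma mem_nearNeighbors {x y z : V} :
    z ∈ nearNeighbors G x y ↔ G.dist x z = 1 ∧ G.dist y z ≤ 2 := by
  simp [nearNeighbors]

lemma sum_nearNeighbors {M : Type*} [AddCommMonoid M] (hG : G.Connected) {x y : V}
    (hxy : G.dist x y = 2) (f : V → M) : ∑ z ∈ nearNeighbors G x y, f z =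
      ∑ z ∈ sphereInter G x y 1 1, f z + ∑ z ∈ sphereInter G x y 1 2, f z := by
  classical
  have hdisj : Disjoint (sphereInter G x y 1 1) (sphereInter G x y 1 2) := by
    refine disjoint_left.2 fun z h₁ h₂ => ?_
    rw [mem_sphereInter] at h₁ h₂
    omega
  rw [← sum_union hdisj]
  congr 1
  ext z
  have := hG.dist_triangle (u := x) (v := z) (w := y)
  have := G.dist_comm (u := z) (v := y)
  simp only [mem_nearNeighbors, mem_union, mem_sphereInter]
  omega

/-- The vertices `z` at distance two from `x` that have the same near neighbours of `x` as `y`. -/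
noncomputable def nearClass (G : SimpleGraph V) (x y : V) : Finset V :=
  open Classical in {z | G.dist x z = 2 ∧ nearNeighbors G x z = nearNeighbors G x y}

lemma mem_nearClass {x y z : V} : z ∈ nearClass G x y ↔
    G.dist x z = 2 ∧ nearNeighbors G x z = nearNeighbors G x y := by
  simp [nearClass]

lemma mem_nearClass_self {x y : V} (hxy : G.dist x y = 2) : y ∈ nearClass G x y :=
  mem_nearClass.2 ⟨hxy, rfl⟩

/-- The union of `{x}`, the near neighbours of `x` with respect to `y` and the near class of `y`.
For a graph of negative type and `∂(x, y) = 2` it is the strongly closed subgraph of diameter two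
that contains `x` and `y`. -/
noncomputable def diamTwoHull (G : SimpleGraph V) (x y : V) : Finset V :=
  open Classical in insert x (nearNeighbors G x y ∪ nearClass G x y)

lemma mem_diamTwoHull {x y z : V} : z ∈ diamTwoHull G x y ↔
    z = x ∨ z ∈ nearNeighbors G x y ∨ z ∈ nearClass G x y := by
  simp [diamTwoHull]

/-- `S` induces a strongly closed (also called weak-geodetically closed) subgraph of diameter two,
each of whose vertices is at distance two from some other one. -/
structure IsStronglyClosed (G : SimpleGraph V) (S : Finset V) : Prop where
  dist_le_two : ∀ g ∈ S, ∀ h ∈ S, G.dist g h ≤ 2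
  exists_dist_eq_two : ∀ g ∈ S, ∃ h ∈ S, G.dist g h = 2
  nearNeighbors_subset : ∀ g ∈ S, ∀ h ∈ S, G.dist g h = 2 → nearNeighbors G g h ⊆ S

namespace IsNegativeType

variable {S : Finset V}

lemma exists_mem_sphereInter_two (hG : IsNegativeType G b a c₂) (hxy : G.dist x y = 2) :
    ∃ z, G.dist x z = 1 ∧ G.dist y z = 2 := by
  have hpos := hG.a_two_pos
  rw [← hG.card_sphereInter_of_dist_eq hxy, card_pos] at hpos
  exact hpos.imp fun z => mem_sphereInter.1

lemma card_nearNeighbors (hG : IsNegativeType G b a c₂) (hxy : G.dist x y = 2) :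
    #(nearNeighbors G x y) = c₂ + a 2 := by
  rw [card_eq_sum_ones, sum_nearNeighbors hG.connected hxy, ← card_eq_sum_ones, ← card_eq_sum_ones,
    hG.card_sphereInter_one_one hxy, hG.card_sphereInter_of_dist_eq hxy]

lemma nearNeighbors_eq_of_subset (hG : IsNegativeType G b a c₂) (hy : G.dist x y = 2)
    (hz : G.dist x z = 2) (h : nearNeighbors G x y ⊆ nearNeighbors G x z) :
    nearNeighbors G x y = nearNeighbors G x z :=
  eq_of_subset_of_card_le h (by rw [hG.card_nearNeighbors hy, hG.card_nearNeighbors hz])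

lemma nearNeighbors_eq_of_adj (hG : IsNegativeType G b a c₂) (hy : G.dist x y = 2)
    (hz : G.dist x z = 2) (hyz : G.dist y z = 1) : nearNeighbors G x y = nearNeighbors G x z := by
  refine hG.nearNeighbors_eq_of_subset hy hz fun r hr => ?_
  rw [mem_nearNeighbors] at hr ⊢
  refine ⟨hr.1, ?_⟩
  by_contra! hzr
  have := hG.connected.dist_triangle (u := r) (v := y) (w := z)
  rw [G.dist_comm (u := z)] at hzr
  rw [G.dist_comm (u := x), G.dist_comm (u := y)] at hr
  have := hG.dist_eq_succ_of_parallelogram two_ne_zero (by omega : G.dist r y = 2) hyz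
    (by omega) hr.1 (by rw [G.dist_comm, hy])
  omega

lemma mem_nearClass_of_adj (hG : IsNegativeType G b a c₂) (hz : z ∈ nearClass G x y)
    (hzu : G.dist z u = 1) (hxu : G.dist x u = 2) : u ∈ nearClass G x y := by
  rw [mem_nearClass] at hz ⊢
  exact ⟨hxu, (hG.nearNeighbors_eq_of_adj hz.1 hxu hzu).symm.trans hz.2⟩

lemma exists_mem_nearClass_dist_eq_two (hG : IsNegativeType G b a c₂) (hxy : G.dist x y = 2)
    (hz : z ∈ nearNeighbors G x y) : ∃ w ∈ nearClass G x y, G.dist z w = 2 := by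
  obtain ⟨hxz, hyz⟩ := mem_nearNeighbors.1 hz
  obtain hyz | hyz := hyz.lt_or_eq
  · obtain ⟨w, hyw, hxw⟩ := hG.exists_mem_sphereInter_two (G.dist_comm.trans hxy)
    have := hG.connected.dist_triangle (u := x) (v := z) (w := y)
    have := G.dist_comm (u := y) (v := z)
    refine ⟨w, hG.mem_nearClass_of_adj (mem_nearClass_self hxy) hyw hxw, ?_⟩
    refine hG.dist_eq_two_of_commonNeighbor (by omega : G.dist y z = 1) hyw ?_
    rintro rfl
    omega
  · exact ⟨y, mem_nearClass_self hxy, G.dist_comm.trans hyz⟩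

lemma dist_le_two_of_mem_nearClass (hG : IsNegativeType G b a c₂) (hz : z ∈ nearClass G x y)
    (hw : w ∈ nearClass G x y) : G.dist z w ≤ 2 := by
  rw [mem_nearClass] at hz hw
  obtain ⟨r, hxr, hzr⟩ := exists_dist_eq_one_and_dist_eq hG.connected hz.1
  obtain ⟨t, hxt, hwt⟩ := exists_dist_eq_one_and_dist_eq hG.connected hw.1
  have hwr : r ∈ nearNeighbors G x w := by
    rw [hw.2, ← hz.2]
    exact mem_nearNeighbors.2 ⟨hxr, by omega⟩
  have hzt : t ∈ nearNeighbors G x z := by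
    rw [hz.2, ← hw.2]
    exact mem_nearNeighbors.2 ⟨hxt, by omega⟩
  rw [mem_nearNeighbors] at hwr hzt
  by_contra! hzw
  have := hG.connected.dist_triangle (u := w) (v := r) (w := z)
  rw [G.dist_comm (u := z) (v := r)] at hzr
  rw [G.dist_comm (u := z) (v := t)] at hzt
  rw [G.dist_comm (u := z) (v := w)] at hzw
  have hrt : G.dist r t = 2 := by
    refine hG.dist_eq_two_of_commonNeighbor hxr hxt ?_
    rintro rfl
    omega
  have := (hG.dist_eq_of_dist_eq_add_two (by omega) hzr (by omega)).1 t
    (mem_sphereInter.2 ⟨hwt, hrt⟩)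
  omega

lemma dist_le_two_of_mem_diamTwoHull (hG : IsNegativeType G b a c₂)
    (hg : g ∈ diamTwoHull G x y) (hz : z ∈ diamTwoHull G x y) : G.dist g z ≤ 2 := by
  have dist_class_near : ∀ w ∈ nearClass G x y, ∀ r ∈ nearNeighbors G x y, G.dist w r ≤ 2 :=
    fun w hw r hr => (mem_nearNeighbors.1 ((mem_nearClass.1 hw).2 ▸ hr)).2
  have dist_near : ∀ r ∈ nearNeighbors G x y, G.dist x r = 1 :=
    fun r hr => (mem_nearNeighbors.1 hr).1
  have dist_class : ∀ w ∈ nearClass G x y, G.dist x w = 2 := fun w hw => (mem_nearClass.1 hw).1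
  have := hG.connected.dist_triangle (u := g) (v := x) (w := z)
  have := G.dist_comm (u := g) (v := x)
  rcases mem_diamTwoHull.1 hg with rfl | hg | hg <;> rcases mem_diamTwoHull.1 hz with rfl | hz | hz
  · simp
  · exact (dist_near z hz).trans_le one_le_two
  · exact (dist_class z hz).le
  · exact G.dist_comm.trans_le ((dist_near g hg).trans_le one_le_two)
  · linarith [dist_near g hg, dist_near z hz]
  · exact G.dist_comm.trans_le (dist_class_near z hz g hg)
  · exact G.dist_comm.trans_le (dist_class g hg).le
  · exact dist_class_near g hg z hz
  · exact hG.dist_le_two_of_mem_nearClass hg hz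

lemma exists_commonNeighbor_dist_ne_one (hG : IsNegativeType G b a c₂) (hvx : G.dist v x = 2)
    (hvz : G.dist v z = 2) (hvg : G.dist v g = 1) (hxg : G.dist x g = 1) (hzg : G.dist z g ≠ 1) :
    ∃ m, G.dist v m = 1 ∧ G.dist z m = 1 ∧ G.dist x m ≠ 1 := by
  by_contra! hall
  have sphere_eq : sphereInter G v z 1 1 = sphereInter G v x 1 1 := by
    refine eq_of_subset_of_card_le (fun m hm => ?_) ?_
    · rw [mem_sphereInter] at hm ⊢
      exact ⟨hm.1, hall m hm.1 hm.2⟩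
    · rw [hG.card_sphereInter_one_one hvx, hG.card_sphereInter_one_one hvz]
  exact hzg (mem_sphereInter.1 (sphere_eq ▸ mem_sphereInter.2 ⟨hvg, hxg⟩)).2

lemma nearNeighbors_subset_diamTwoHull (hG : IsNegativeType G b a c₂)
    (hg : g ∈ nearNeighbors G x y) (hz : z ∈ nearClass G x y) (hgz : G.dist g z = 2) :
    nearNeighbors G g z ⊆ diamTwoHull G x y := by
  intro v hv
  rw [mem_nearNeighbors] at hv
  rw [mem_diamTwoHull]
  have hxz := (mem_nearClass.1 hz).1
  have hgx := G.dist_comm.trans (mem_nearNeighbors.1 hg).1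
  refine or_iff_not_imp_left.2 fun hvx => .inr ?_
  have hxv : G.dist x v = 2 := hG.dist_eq_two_of_commonNeighbor hgx hv.1 (Ne.symm hvx)
  obtain hzv | hzv := hv.2.lt_or_eq
  · have := hG.connected.dist_triangle (u := g) (v := v) (w := z)
    have := G.dist_comm (u := v) (v := z)
    exact hG.mem_nearClass_of_adj hz (by omega) hxv
  obtain ⟨m, hvm, hzm, hxm⟩ := hG.exists_commonNeighbor_dist_ne_one (G.dist_comm.trans hxv)
    (G.dist_comm.trans hzv) (G.dist_comm.trans hv.1) (G.dist_comm.trans hgx)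
    (by rw [G.dist_comm, hgz]; decide)
  have hxm₂ : G.dist x m = 2 := by
    have := hG.connected.dist_triangle (u := x) (v := z) (w := m)
    have := hG.connected.dist_triangle (u := x) (v := v) (w := m)
    have hxm₃ : G.dist x m ≠ 3 := by
      intro hxm₃
      have := hG.dist_eq_succ_of_parallelogram two_ne_zero hxz hzm hxm₃
        (mem_nearNeighbors.1 hg).1 (G.dist_comm.trans hgz)
      have := hG.connected.dist_triangle (u := g) (v := v) (w := m)
      omega
    have := hG.connected.dist_triangle (u := x) (v := m) (w := z)
    have := G.dist_comm (u := m) (v := z)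
    omega
  exact hG.mem_nearClass_of_adj (hG.mem_nearClass_of_adj hz hzm hxm₂) (G.dist_comm.trans hvm) hxv

lemma isStronglyClosed (hG : IsNegativeType G b a c₂)
    (hdist : ∀ g ∈ S, ∀ h ∈ S, G.dist g h ≤ 2)
    (hnear : ∀ g ∈ S, ∃ h ∈ S, G.dist g h = 2 ∧ nearNeighbors G g h ⊆ S) :
    IsStronglyClosed G S where
  dist_le_two := hdist
  exists_dist_eq_two g hg := (hnear g hg).imp fun _ h => ⟨h.1, h.2.1⟩
  nearNeighbors_subset g hg h hh hgh := by
    obtain ⟨z, -, hgz, hsub⟩ := hnear g hg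
    rw [← hG.nearNeighbors_eq_of_subset hgz hgh fun m hm => ?_]
    · exact hsub
    · exact mem_nearNeighbors.2 ⟨(mem_nearNeighbors.1 hm).1, hdist h hh m (hsub hm)⟩

lemma isStronglyClosed_diamTwoHull (hG : IsNegativeType G b a c₂) (hxy : G.dist x y = 2) :
    IsStronglyClosed G (diamTwoHull G x y) := by
  refine hG.isStronglyClosed (fun g hg h hh => hG.dist_le_two_of_mem_diamTwoHull hg hh) ?_
  have near_subset : nearNeighbors G x y ⊆ diamTwoHull G x y :=
    fun r hr => mem_diamTwoHull.2 (.inr (.inl hr))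
  have class_subset : nearClass G x y ⊆ diamTwoHull G x y :=
    fun w hw => mem_diamTwoHull.2 (.inr (.inr hw))
  intro g hg
  rcases mem_diamTwoHull.1 hg with rfl | hg | hg
  · exact ⟨y, class_subset (mem_nearClass_self hxy), hxy, near_subset⟩
  · obtain ⟨z, hz, hgz⟩ := hG.exists_mem_nearClass_dist_eq_two hxy hg
    exact ⟨z, class_subset hz, hgz, hG.nearNeighbors_subset_diamTwoHull hg hz hgz⟩
  · refine ⟨x, mem_diamTwoHull.2 (.inl rfl), G.dist_comm.trans (mem_nearClass.1 hg).1, ?_⟩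
    intro m hm
    rw [mem_nearNeighbors] at hm
    have := hG.connected.dist_triangle (u := x) (v := m) (w := g)
    have := (mem_nearClass.1 hg).1
    have := G.dist_comm (u := m) (v := g)
    obtain hxm | hxm : G.dist x m = 1 ∨ G.dist x m = 2 := by omega
    · refine near_subset ((mem_nearClass.1 hg).2 ▸ mem_nearNeighbors.2 ⟨hxm, by omega⟩)
    · exact class_subset (hG.mem_nearClass_of_adj hg hm.1 hxm)

lemma exists_dist_eq_two_of_adj (hG : IsNegativeType G b a c₂) (hS : IsStronglyClosed G S)
    (hg : g ∈ S) (hz : z ∈ S) (hgz : G.dist g z = 1) :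
    ∃ m ∈ S, G.dist g m = 2 ∧ G.dist z m = 2 := by
  obtain ⟨h, hh, hzh⟩ := hS.exists_dist_eq_two z hz
  have := hG.connected.dist_triangle (u := z) (v := g) (w := h)
  have hgh := hS.dist_le_two g hg h hh
  have hzg := G.dist_comm.trans hgz
  obtain hgh | hgh := hgh.lt_or_eq
  · obtain ⟨m, hhm, hzm⟩ := hG.exists_mem_sphereInter_two (G.dist_comm.trans hzh)
    have hgh : G.dist h g = 1 := by rw [G.dist_comm]; omega
    refine ⟨m, hS.nearNeighbors_subset h hh z hz (G.dist_comm.trans hzh)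
      (mem_nearNeighbors.2 ⟨hhm, hzm.le⟩), hG.dist_eq_two_of_commonNeighbor hgh hhm ?_, hzm⟩
    rintro rfl
    omega
  · exact ⟨h, hh, hgh, hzh⟩

lemma sum_dist_eq_one_of_dist_eq_two (hG : IsNegativeType G b a c₂) (hS : IsStronglyClosed G S)
    (hg : g ∈ S) (hz : z ∈ S) (hgz : G.dist g z = 2) (f : V → ℝ) :
    ∑ m ∈ S with G.dist g m = 1, f m =
      ∑ m ∈ sphereInter G g z 1 1, f m + ∑ m ∈ sphereInter G g z 1 2, f m := by
  rw [← sum_nearNeighbors hG.connected hgz]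
  congr 1
  ext m
  rw [mem_filter, mem_nearNeighbors]
  refine ⟨fun hm => ⟨hm.2, hS.dist_le_two z hz m hm.1⟩, fun hm => ⟨?_, hm.1⟩⟩
  exact hS.nearNeighbors_subset g hg z hz hgz (mem_nearNeighbors.2 hm)

lemma sum_dist_eq_one_sub (hG : IsNegativeType G b a c₂) (hS : IsStronglyClosed G S)
    (hg : g ∈ S) (hz : z ∈ S) (w : V) :
    ∑ m ∈ S with G.dist g m = 1, b⁻¹ ^ G.dist m w - (1 + b - c₂) * b⁻¹ ^ G.dist g w =
      ∑ m ∈ S with G.dist z m = 1, b⁻¹ ^ G.dist m w - (1 + b - c₂) * b⁻¹ ^ G.dist z w := by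
  have of_dist_eq_two : ∀ g ∈ S, ∀ z ∈ S, G.dist g z = 2 →
      ∑ m ∈ S with G.dist g m = 1, b⁻¹ ^ G.dist m w - (1 + b - c₂) * b⁻¹ ^ G.dist g w =
        ∑ m ∈ S with G.dist z m = 1, b⁻¹ ^ G.dist m w - (1 + b - c₂) * b⁻¹ ^ G.dist z w := by
    intro g hg z hz hgz
    rw [hG.sum_dist_eq_one_of_dist_eq_two hS hg hz hgz,
      hG.sum_dist_eq_one_of_dist_eq_two hS hz hg (G.dist_comm.trans hgz), sphereInter_comm z g 1 1]
    linear_combination hG.sum_sub_sum hgz w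
  obtain h₀ | h₁ | h₂ : G.dist g z = 0 ∨ G.dist g z = 1 ∨ G.dist g z = 2 := by
    have := hS.dist_le_two g hg z hz
    omega
  · rw [hG.connected.dist_eq_zero_iff.1 h₀]
  · obtain ⟨m, hm, hgm, hzm⟩ := hG.exists_dist_eq_two_of_adj hS hg hz h₁
    exact (of_dist_eq_two g hg m hm hgm).trans (of_dist_eq_two z hz m hm hzm).symm
  · exact of_dist_eq_two g hg z hz h₂

lemma card_dist_eq_one (hG : IsNegativeType G b a c₂) (hS : IsStronglyClosed G S) (hg : g ∈ S) :
    #{m ∈ S | G.dist g m = 1} = c₂ + a 2 := by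
  obtain ⟨z, hz, hgz⟩ := hS.exists_dist_eq_two g hg
  have hsum := hG.sum_dist_eq_one_of_dist_eq_two hS hg hz hgz fun _ => 1
  rw [← sum_nearNeighbors hG.connected hgz, sum_const, sum_const, hG.card_nearNeighbors hgz,
    nsmul_one, nsmul_one] at hsum
  exact_mod_cast hsum

lemma card_sub_card_mul (hG : IsNegativeType G b a c₂) (hS : IsStronglyClosed G S)
    (hlevel : ∀ m ∈ S, G.dist m v = i ∨ G.dist m v = i + 1) (hg : g ∈ S) (hz : z ∈ S) :
    ((#{m ∈ S | G.dist g m = 1 ∧ G.dist m v = i + 1} : ℝ) -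
        #{m ∈ S | G.dist z m = 1 ∧ G.dist m v = i + 1}) * (b⁻¹ ^ (i + 1) - b⁻¹ ^ i) =
      (1 + b - c₂) * (b⁻¹ ^ G.dist g v - b⁻¹ ^ G.dist z v) := by
  have hsum := hG.sum_dist_eq_one_sub hS hg hz v
  have hlevel' : ∀ h, ∀ m ∈ {m ∈ S | G.dist h m = 1}, G.dist m v = i ∨ G.dist m v = i + 1 :=
    fun h m hm => hlevel m (mem_filter.1 hm).1
  rw [sum_pow_of_eq_or_eq_succ (hlevel' g), sum_pow_of_eq_or_eq_succ (hlevel' z),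
    hG.card_dist_eq_one hS hg, hG.card_dist_eq_one hS hz, filter_filter, filter_filter] at hsum
  linear_combination hsum

lemma card_eq_card_of_dist_eq (hG : IsNegativeType G b a c₂) (hS : IsStronglyClosed G S)
    (hlevel : ∀ m ∈ S, G.dist m v = i ∨ G.dist m v = i + 1) (hg : g ∈ S) (hz : z ∈ S)
    (hgz : G.dist g v = G.dist z v) : #{m ∈ S | G.dist g m = 1 ∧ G.dist m v = i + 1} =
      #{m ∈ S | G.dist z m = 1 ∧ G.dist m v = i + 1} := by
  have key := hG.card_sub_card_mul hS hlevel hg hz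
  rw [hgz, sub_self, mul_zero, pow_succ, ← mul_sub_one, mul_eq_zero] at key
  have := hG.inv_neg
  exact_mod_cast sub_eq_zero.1
    (key.resolve_right (mul_ne_zero (pow_ne_zero i this.ne) (by linarith)))

lemma card_eq_card_add_of_dist_eq_succ (hG : IsNegativeType G b a c₂) (hS : IsStronglyClosed G S)
    (hlevel : ∀ m ∈ S, G.dist m v = i ∨ G.dist m v = i + 1) (hg : g ∈ S) (hz : z ∈ S)
    (hgv : G.dist g v = i + 1) (hzv : G.dist z v = i) :
    (#{m ∈ S | G.dist g m = 1 ∧ G.dist m v = i + 1} : ℝ) =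
      #{m ∈ S | G.dist z m = 1 ∧ G.dist m v = i + 1} + (1 + b - c₂) := by
  have key := hG.card_sub_card_mul hS hlevel hg hz
  rw [hgv, hzv] at key
  have hq := hG.inv_neg
  have : b⁻¹ ^ (i + 1) - b⁻¹ ^ i ≠ 0 := by
    rw [pow_succ, ← mul_sub_one]
    exact mul_ne_zero (pow_ne_zero i hq.ne) (by linarith)
  linarith [mul_right_cancel₀ this key]

lemma dist_eq_one_of_dist_eq_two (hG : IsNegativeType G b a c₂) (hS : IsStronglyClosed G S)
    (hx : x ∉ S) (hg : g ∈ S) (hz : z ∈ S) (hxg : G.dist x g = 1) (hxz : G.dist x z = 2) :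
    G.dist g z = 1 := by
  obtain h₀ | h₁ | hgz : G.dist g z = 0 ∨ G.dist g z = 1 ∨ G.dist g z = 2 := by
    have := hS.dist_le_two g hg z hz
    omega
  · rw [hG.connected.dist_eq_zero_iff.1 h₀] at hxg
    omega
  · exact h₁
  · exact absurd (hS.nearNeighbors_subset g hg z hz hgz
      (mem_nearNeighbors.2 ⟨G.dist_comm.trans hxg, G.dist_comm.trans_le hxz.le⟩)) hx

lemma dist_eq_two_or_three (hG : IsNegativeType G b a c₂) (hS : IsStronglyClosed G S)
    (hx : x ∉ S) (hz : z ∈ S) (hw : w ∈ S) (hzx : G.dist z x = 2) (hwx : G.dist w x = 2)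
    (hzw : G.dist z w = 1) (hg : g ∈ S) : G.dist g x = 2 ∨ G.dist g x = 3 := by
  have hgw := hS.dist_le_two g hg w hw
  have hgz := hS.dist_le_two g hg z hz
  have := hG.connected.dist_triangle (u := g) (v := w) (w := x)
  have h₀ : G.dist g x ≠ 0 := fun h => hx (hG.connected.dist_eq_zero_iff.1 h ▸ hg)
  have h₁ : G.dist g x ≠ 1 := by
    intro h₁
    rw [G.dist_comm] at h₁ hzx hwx
    have := hG.dist_eq_two_of_commonNeighbor (hG.dist_eq_one_of_dist_eq_two hS hx hg hz h₁ hzx)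
      (hG.dist_eq_one_of_dist_eq_two hS hx hg hw h₁ hwx) (by rintro rfl; simp at hzw)
    omega
  have h₄ : G.dist g x ≠ 4 := by
    intro h₄
    have := hG.connected.dist_triangle (u := g) (v := z) (w := x)
    have := (hG.dist_eq_of_dist_eq_add_two (by omega : G.dist g w = 2) hwx (by omega)).2 z
      (mem_sphereInter.2 ⟨G.dist_comm.trans hzw, by omega⟩)
    omega
  omega

lemma dist_eq_three_or_four (hG : IsNegativeType G b a c₂) (hS : IsStronglyClosed G S)
    (hxv : G.dist x v = 1) (hlevel : ∀ m ∈ S, G.dist m x = 2 ∨ G.dist m x = 3)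
    (hu : u ∈ S) (hz : z ∈ S) (hux : G.dist u x = 3) (hzx : G.dist z x = 2)
    (huv : G.dist u v = 4) (hg : g ∈ S) : G.dist g v = 3 ∨ G.dist g v = 4 := by
  have := hlevel g hg
  have := hG.connected.dist_triangle (u := g) (v := x) (w := v)
  have := hG.connected.dist_triangle (u := u) (v := g) (w := v)
  have := hS.dist_le_two u hu g hg
  suffices h₂ : G.dist g v ≠ 2 by omega
  intro h₂
  have hug : G.dist u g = 2 := by omega
  have sphere_subset : sphereInter G u g 1 2 ⊆ {m ∈ S | G.dist u m = 1 ∧ G.dist m x = 3} := by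
    intro m hm
    have hmv := (hG.dist_eq_of_dist_eq_add_two hug h₂ huv).1 m hm
    rw [mem_sphereInter] at hm
    have hmS := hS.nearNeighbors_subset u hu g hg hug (mem_nearNeighbors.2 ⟨hm.1, hm.2.le⟩)
    have := hlevel m hmS
    have := hG.connected.dist_triangle (u := m) (v := x) (w := v)
    exact mem_filter.2 ⟨hmS, hm.1, by omega⟩
  have card_ge := card_le_card sphere_subset
  have card_le : #{m ∈ S | G.dist z m = 1 ∧ G.dist m x = 3} ≤ #{m ∈ S | G.dist z m = 1} :=
    card_le_card (monotone_filter_right S fun m _ hm => hm.1)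
  rw [hG.card_sphereInter_of_dist_eq hug, ← Nat.cast_le (α := ℝ)] at card_ge
  rw [hG.card_dist_eq_one hS hz, ← Nat.cast_le (α := ℝ)] at card_le
  push_cast at card_le
  linarith [hG.card_eq_card_add_of_dist_eq_succ hS hlevel hu hz hux hzx, hG.lt_neg_one]

lemma dist_eq_four_of_dist_eq_three (hG : IsNegativeType G b a c₂) (hS : IsStronglyClosed G S)
    (hxv : G.dist x v = 1) (hlevel : ∀ m ∈ S, G.dist m x = 2 ∨ G.dist m x = 3)
    (hu : u ∈ S) (hw : w ∈ S) (hz : z ∈ S) (hux : G.dist u x = 3) (hwx : G.dist w x = 3)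
    (hzx : G.dist z x = 2) (huv : G.dist u v = 4) : G.dist w v = 4 := by
  have hlevel' := fun m hm => hG.dist_eq_three_or_four hS hxv hlevel hu hz hux hzx huv (g := m) hm
  refine (hlevel' w hw).resolve_left fun hwv => ?_
  have far_of_u : {m ∈ S | G.dist u m = 1 ∧ G.dist m x = 3} ⊆
      {m ∈ S | G.dist u m = 1 ∧ G.dist m v = 4} := by
    intro m hm
    rw [mem_filter] at hm ⊢
    refine ⟨hm.1, hm.2.1, (hlevel' m hm.1).resolve_left fun hmv => ?_⟩
    have := hG.dist_eq_succ_of_parallelogram three_ne_zero (G.dist_comm.trans hmv)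
      (G.dist_comm.trans hm.2.1) (G.dist_comm.trans huv) (G.dist_comm.trans hxv) hm.2.2
    rw [G.dist_comm] at this
    omega
  have far_of_w : {m ∈ S | G.dist w m = 1 ∧ G.dist m v = 4} ⊆
      {m ∈ S | G.dist w m = 1 ∧ G.dist m x = 3} := by
    intro m hm
    rw [mem_filter] at hm ⊢
    have := hlevel m hm.1
    have := hG.connected.dist_triangle (u := m) (v := x) (w := v)
    exact ⟨hm.1, hm.2.1, by omega⟩
  have card_le := (card_le_card far_of_w).trans_eq
    (hG.card_eq_card_of_dist_eq hS hlevel hw hu (hwx.trans hux.symm)) |>.trans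
      (card_le_card far_of_u)
  rw [← Nat.cast_le (α := ℝ)] at card_le
  linarith [hG.card_eq_card_add_of_dist_eq_succ hS hlevel' hu hw huv hwv, hG.one_add_sub_neg]

theorem exists_dist_eq_three_of_path (hG : IsNegativeType G b a c₂) (hxu : G.dist x u = 3)
    (hxz : G.dist x z = 2) (hxw : G.dist x w = 2) (huz : G.dist u z = 1) (hzw : G.dist z w = 1) :
    ∃ w', G.dist w w' = 1 ∧ G.dist x w' = 3 ∧
      ∀ v, G.dist x v = 1 → G.dist u v = 4 → G.dist w' v = 4 := by
  have huw : G.dist u w = 2 := by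
    refine hG.dist_eq_two_of_commonNeighbor (G.dist_comm.trans huz) hzw ?_
    rintro rfl
    omega
  have hS := hG.isStronglyClosed_diamTwoHull huw
  have hu : u ∈ diamTwoHull G u w := mem_diamTwoHull.2 (.inl rfl)
  have hw : w ∈ diamTwoHull G u w := mem_diamTwoHull.2 (.inr (.inr (mem_nearClass_self huw)))
  have hz : z ∈ diamTwoHull G u w := by
    refine mem_diamTwoHull.2 (.inr (.inl (mem_nearNeighbors.2 ⟨huz, ?_⟩)))
    rw [G.dist_comm, hzw]
    exact one_le_two
  rw [G.dist_comm] at hxu hxz hxw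
  have hx : x ∉ diamTwoHull G u w := fun hx => by
    have := hS.dist_le_two u hu x hx
    omega
  have hlevel := fun m hm => hG.dist_eq_two_or_three hS hx hz hw hxz hxw hzw (g := m) hm
  have huz_mem : u ∈ {m ∈ diamTwoHull G u w | G.dist z m = 1 ∧ G.dist m x = 3} :=
    mem_filter.2 ⟨hu, G.dist_comm.trans huz, hxu⟩
  obtain ⟨w', hw'⟩ : {m ∈ diamTwoHull G u w | G.dist w m = 1 ∧ G.dist m x = 3}.Nonempty := by
    rw [← card_pos, hG.card_eq_card_of_dist_eq hS hlevel hw hz (hxw.trans hxz.symm), card_pos]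
    exact ⟨u, huz_mem⟩
  obtain ⟨hw'S, hww', hw'x⟩ := mem_filter.1 hw'
  exact ⟨w', hww', G.dist_comm.trans hw'x, fun v hxv huv =>
    hG.dist_eq_four_of_dist_eq_three hS hxv hlevel hu hw'S hz hxu hw'x hxz huv⟩

end IsNegativeType

end NegativeType

theorem pentagon_mem_Delta_general [Finite V] (G : SimpleGraph V) (hconn : G.Connected)
    (D : ℕ) (hD : 4 ≤ D)
    (hdiam_le : ∀ x y : V, G.dist x y ≤ D) (hdiam : ∃ x y : V, G.dist x y = D)
    (p : ℕ → ℕ → ℕ → ℕ) (hdr : G.IsDistRegularWith D p)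
    (b α β : ℝ) (hcp : HasClassicalParams D p b α β)
    (ha1 : p 1 1 1 = 0) (ha2 : p 2 1 2 ≠ 0)
    (x y u z w : V) (huΔ : u ∈ Delta G x y) (huz : G.dist u z = 1) (hzw : G.dist z w = 1)
    (hz : G.dist x z = 2) (hw : G.dist x w = 2) (hu : G.dist x u = 3) :
    w ∈ Delta G x y := by
  have := Fintype.ofFinite V
  have hG := hcp.isNegativeType hconn hdiam_le hdiam hdr hD ha1 ha2
  obtain ⟨w', hww', hxw', hfar⟩ := hG.exists_dist_eq_three_of_path hu hz hw huz hzw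
  obtain ⟨u', ⟨hxu', hBu'⟩, hsum⟩ := huΔ
  obtain rfl : u = u' := hconn.dist_eq_zero_iff.1 (by omega)
  suffices hB : Bset G x u = Bset G x w' from
    ⟨w', ⟨hxw', hB.symm.trans hBu'⟩, by rw [hw, hww', hxw']⟩
  have ncard_u := hdr 3 1 4 (by omega) (by omega) hD x u hu
  have ncard_w' := hdr 3 1 4 (by omega) (by omega) hD x w' hxw'
  rw [Bset, Bset, hu, hxw']
  refine Set.eq_of_subset_of_ncard_le ?_ (by rw [ncard_u, ncard_w']) (Set.toFinite _)
  exact fun v hv => ⟨hv.1, hfar v hv.1 hv.2⟩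

/-- Classical parameters `(D, b, α, β)`, `D ≥ 4`, `a₁ = 0`, `a₂ ≠ 0`,
`∂(x,y) = 3`, `Δ = [x, C]`. If `z, u ∈ Δ` and `s t u z w` is a pentagon with
`z, w ∈ Γ₂(x)` and `u ∈ Γ₃(x)`, then `w ∈ Δ`. -/
theorem pentagon_mem_Delta [Fintype V] (G : SimpleGraph V) (hconn : G.Connected)
    (D : ℕ) (hD : 4 ≤ D)
    (hdiam_le : ∀ x y : V, G.dist x y ≤ D) (hdiam : ∃ x y : V, G.dist x y = D)
    (p : ℕ → ℕ → ℕ → ℕ) (hdr : G.IsDistRegularWith D p)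
    (b α β : ℝ) (hcp : HasClassicalParams D p b α β)
    (ha1 : p 1 1 1 = 0) (ha2 : p 2 1 2 ≠ 0)
    (x y : V) (hxy : G.dist x y = 3)
    (s t u z w : V) (hzΔ : z ∈ Delta G x y) (huΔ : u ∈ Delta G x y)
    (hst : G.dist s t = 1) (htu : G.dist t u = 1) (huz : G.dist u z = 1)
    (hzw : G.dist z w = 1) (hws : G.dist w s = 1)
    (hz : G.dist x z = 2) (hw : G.dist x w = 2) (hu : G.dist x u = 3) :
    w ∈ Delta G x y :=
  pentagon_mem_Delta_general G hconn D hD hdiam_le hdiam p hdr b α β hcp ha1 ha2 x y u z w huΔ huz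
    hzw hz hw hu
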